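/- Let K be an algebraically closed field, let m, n >= 1, let w in S^{m,n}_infty, and fix any antidiagonal term order on K[u_{ij} : (i,j) in [m] x [n]]. Then J_w = init(I_w) = init(I(X_w)) and I_w = I(X_w); in particular, I_w is a prime ideal and the minors det(U_{AB}), over all A subset of [i] and B subset of [j] with |A| = |B| = r_w(i,j)+1 for some (i,j) in [m] x [n], form a Groebner basis for I(X_w) (they generate it and their initial terms generate its initial ideal). -/

import Mathlib

namespace Paper

/-!
We model a permutation of the positive integers `{1, 2, 3, ...}` as an `Equiv.Perm ℕ`
that fixes `0`; all notions below refer only to positive inputs.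
-/

/-- The rank `r_w(i,j) = #{a ∈ [i] : w(a) ∈ [j]}` of the `i × j` partial
permutation matrix of `w`, where `[k] = {1, ..., k}`. -/
def rnk (w : Equiv.Perm ℕ) (i j : ℕ) : ℕ :=
  ((Finset.Icc 1 i).filter fun a => w a ∈ Finset.Icc 1 j).card

/-- Right descent set `Des_R(w) = {i ≥ 1 : w(i) > w(i+1)}`. -/
def DesR (w : Equiv.Perm ℕ) : Set ℕ := {i | 1 ≤ i ∧ w (i + 1) < w i}

/-- Left descent set `Des_L(w) = Des_R(w⁻¹)`. -/
def DesL (w : Equiv.Perm ℕ) : Set ℕ := DesR w⁻¹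

/-- `S_∞`: permutations of the positive integers fixing all but finitely many points. -/
def SInfty : Set (Equiv.Perm ℕ) :=
  {w | w 0 = 0 ∧ Set.Finite {i : ℕ | w i ≠ i}}

/-- `S^{m,n}_∞ = {w ∈ S_∞ : Des_R(w) ⊆ [m], Des_L(w) ⊆ [n]}`. -/
def SmnInfty (m n : ℕ) : Set (Equiv.Perm ℕ) :=
  {w | w ∈ SInfty ∧ DesR w ⊆ Set.Icc 1 m ∧ DesL w ⊆ Set.Icc 1 n}

/-- The Rothe diagram `D(w) = {(i,j) : 0 < j < w(i), 0 < i < w⁻¹(j)}`. -/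
def Rothe (w : Equiv.Perm ℕ) : Set (ℕ × ℕ) :=
  {p | 0 < p.2 ∧ p.2 < w p.1 ∧ 0 < p.1 ∧ p.1 < w⁻¹ p.2}

/-- The function `1_FPF`, sending `i ↦ i - (-1)^i` on positive integers (it fixes `0`). -/
def oneFPF : ℕ → ℕ := fun i => if i % 2 = 1 then i + 1 else i - 1

/-- `I^FPF_∞`: fixed-point-free involutions of the positive integers agreeing with
`1_FPF` at all sufficiently large inputs. -/
def IFPFInfty : Set (Equiv.Perm ℕ) :=
  {z | z 0 = 0 ∧ (∀ i, 1 ≤ i → z i ≠ i) ∧ z * z = 1 ∧ ∃ N, ∀ i, N ≤ i → z i = oneFPF i}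

/-- The skew-symmetric Rothe diagram `D^ss(z) = {(i,j) : 0 < j < z(i), j < i < z(j)}`. -/
def Dss (z : Equiv.Perm ℕ) : Set (ℕ × ℕ) :=
  {p | 0 < p.2 ∧ p.2 < z p.1 ∧ p.2 < p.1 ∧ p.1 < z p.2}

/-- `FPF_n(I_n) = {z ∈ I^FPF_∞ : D^ss(z) ⊆ [n] × [n]}`. -/
def FPFIn (n : ℕ) : Set (Equiv.Perm ℕ) :=
  {z | z ∈ IFPFInfty ∧ Dss z ⊆ Set.Icc 1 n ×ˢ Set.Icc 1 n}

/-- `ℓ_fpf(z) = |D^ss(z)|`. -/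
noncomputable def ellFpf (z : Equiv.Perm ℕ) : ℕ := (Dss z).ncard

/-- Bruhat order on `I^FPF_∞`: reflexive-transitive closure of `z < (i,j) z (i,j)`
whenever `i < j` and `ℓ_fpf` goes up by exactly one. -/
def fpfBruhatLe (z y : Equiv.Perm ℕ) : Prop :=
  Relation.ReflTransGen
    (fun a b => ∃ i j : ℕ, 1 ≤ i ∧ i < j ∧
      b = Equiv.swap i j * a * Equiv.swap i j ∧ ellFpf b = ellFpf a + 1) z y

/-- `i` is a visible descent of `z` if `i ≥ 1` and `z(i+1) < min(i, z(i))`. -/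
def visibleDescent (z : Equiv.Perm ℕ) (i : ℕ) : Prop :=
  1 ≤ i ∧ z (i + 1) < min i (z i)

/-- `Ψ(z, p) = {(p,r) z (p,r) : r > p, ℓ_fpf((p,r) z (p,r)) = ℓ_fpf(z) + 1}`. -/
def PsiSet (z : Equiv.Perm ℕ) (p : ℕ) : Set (Equiv.Perm ℕ) :=
  {y | ∃ r : ℕ, p < r ∧ y = Equiv.swap p r * z * Equiv.swap p r ∧ ellFpf y = ellFpf z + 1}

/-- The dominant component `dom(z) = {(i,j) : i, j ≥ 1, r_z(i,j) = 0}`. -/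
def domSet (z : Equiv.Perm ℕ) : Set (ℕ × ℕ) :=
  {p | 1 ≤ p.1 ∧ 1 ≤ p.2 ∧ rnk z p.1 p.2 = 0}

/-- `(p, q)` is an outer corner of `dom(z)`. -/
def IsOuterCorner (z : Equiv.Perm ℕ) (p q : ℕ) : Prop :=
  1 ≤ p ∧ 1 ≤ q ∧ (p, q) ∉ domSet z ∧
    (p = 1 ∨ (p - 1, q) ∈ domSet z) ∧ (q = 1 ∨ (p, q - 1) ∈ domSet z)

/-- `I_n`: involutions in `S_∞` fixing every `i > n`. -/
def InvolIn (n : ℕ) : Set (Equiv.Perm ℕ) :=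
  {w | w 0 = 0 ∧ w * w = 1 ∧ ∀ i, n < i → w i = i}

/-- The fixed points of `z` lying in `[n]`. -/
def fixedPtsIn (n : ℕ) (z : Equiv.Perm ℕ) : Finset ℕ :=
  (Finset.Icc 1 n).filter fun i => z i = i

/-- The function swapping `m + 2t - 1` and `m + 2t` for every `t ≥ 1`, fixing all other points. -/
def tailSwapFun (m : ℕ) : ℕ → ℕ := fun i =>
  if i ≤ m then i else if (i - m) % 2 = 1 then i + 1 else i - 1

theorem tailSwapFun_involutive (m : ℕ) : Function.Involutive (tailSwapFun m) := by
  intro i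
  unfold tailSwapFun
  split_ifs <;> omega

/-- The involution swapping `m + 2t - 1` and `m + 2t` for every `t ≥ 1`. -/
def tailSwap (m : ℕ) : Equiv.Perm ℕ :=
  Function.Involutive.toPerm _ (tailSwapFun_involutive m)

/-- The fixed-point-free standardization `FPF_n(z) = z ⋅ (i_1,n+1)⋯(i_k,n+k) ⋅ c`,
where `i_1 < ⋯ < i_k` are the fixed points of `z` in `[n]` and `c` swaps
`n+k+2t-1, n+k+2t` for all `t ≥ 1`. -/
noncomputable def fpfStd (n : ℕ) (z : Equiv.Perm ℕ) : Equiv.Perm ℕ :=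
  z *
    (List.ofFn fun t : Fin (fixedPtsIn n z).card =>
      Equiv.swap ((fixedPtsIn n z).orderEmbOfFin rfl t) (n + (t : ℕ) + 1)).prod *
    tailSwap (n + (fixedPtsIn n z).card)

/-- `Mat^ss_n(K)`: skew-symmetric `n × n` matrices (transpose is the negative, zero diagonal).
Row/column index `a : Fin n` corresponds to the (1-indexed) row/column `a + 1`. -/
def MatSS (K : Type*) [CommRing K] (n : ℕ) : Set (Matrix (Fin n) (Fin n) K) :=
  {A | A.transpose = -A ∧ ∀ i, A i i = 0}

/-- The skew-symmetric matrix Schubert variety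
`X^ss_z = {A ∈ Mat^ss_n : rank A_{[i][j]} ≤ r_z(i,j) for all i, j ∈ [n]}`. -/
noncomputable def Xss (K : Type*) [Field K] (n : ℕ) (z : Equiv.Perm ℕ) :
    Set (Matrix (Fin n) (Fin n) K) :=
  {A | A ∈ MatSS K n ∧ ∀ (i j : ℕ) (hi : i ≤ n) (hj : j ≤ n), 1 ≤ i → 1 ≤ j →
    (A.submatrix (Fin.castLE hi) (Fin.castLE hj)).rank ≤ rnk z i j}

/-- `#{(i,j) : i > j, j < z(i), i < z(j)}` for a permutation of `Fin N`
(the `0`-indexed version of `ℓ_fpf`). -/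
def ellFpfFin {N : ℕ} (z : Equiv.Perm (Fin N)) : ℕ :=
  (Finset.univ.filter fun p : Fin N × Fin N => p.2 < p.1 ∧ p.2 < z p.1 ∧ p.1 < z p.2).card

/-- The Pfaffian of an `N × N` matrix:
`pf(A) = ∑_{z fpf involution of [N]} (-1)^{ℓ_fpf(z)} ∏_{z(i) < i} A_{z(i), i}`.
(The sum is empty, hence `0`, when `N` is odd.) -/
noncomputable def Pfaffian {R : Type*} [CommRing R] {N : ℕ} (A : Matrix (Fin N) (Fin N) R) : R :=
  ∑ z ∈ Finset.univ.filter (fun z : Equiv.Perm (Fin N) => (∀ i, z i ≠ i) ∧ ∀ i, z (z i) = i),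
    (-1 : R) ^ ellFpfFin z * ∏ i ∈ Finset.univ.filter (fun i : Fin N => z i < i), A (z i) i

/-- Index set for the variables `u_{ij}`, `n ≥ i > j ≥ 1`, of the coordinate ring
`R_n = K[Mat^ss_n]`; the variable `⟨(a, b), _⟩` is `u_{a+1, b+1}`. -/
abbrev SSVar (n : ℕ) : Type := {p : Fin n × Fin n // p.2 < p.1}

/-- The generic skew-symmetric matrix `U^ss` over `R_n`. -/
noncomputable def Uss (K : Type*) [CommRing K] (n : ℕ) :
    Matrix (Fin n) (Fin n) (MvPolynomial (SSVar n) K) :=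
  Matrix.of fun i j =>
    if h : j < i then MvPolynomial.X ⟨(i, j), h⟩
    else if h' : i < j then -MvPolynomial.X ⟨(j, i), h'⟩
    else 0

/-- The ideal of polynomials vanishing on a set `X`, where a point `A` is evaluated
via `ev A : σ → K`. -/
noncomputable def vanishingIdeal {K : Type*} [CommRing K] {σ M : Type*}
    (X : Set M) (ev : M → σ → K) : Ideal (MvPolynomial σ K) where
  carrier := {f | ∀ A ∈ X, MvPolynomial.eval (ev A) f = 0}
  zero_mem' := by simp
  add_mem' := by
    intro f g hf hg
    simp only [Set.mem_setOf_eq] at *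
    intro A hA
    rw [map_add, hf A hA, hg A hA, add_zero]
  smul_mem' := by
    intro c f hf
    simp only [Set.mem_setOf_eq] at *
    intro A hA
    rw [smul_eq_mul, map_mul, hf A hA, mul_zero]

/-- `I(X^ss_z) ⊆ R_n`, where `u_{ij}` is evaluated at `A` as `A_{ij}`. -/
noncomputable def IXss (K : Type*) [Field K] (n : ℕ) (z : Equiv.Perm ℕ) :
    Ideal (MvPolynomial (SSVar n) K) :=
  vanishingIdeal (Xss K n z) fun A v => A v.1.1 v.1.2

/-- `pf(U^ss_{RR})` for a finite row/column set `R` (listed in increasing order). -/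
noncomputable def pfUss (K : Type*) [CommRing K] {n : ℕ} (R : Finset (Fin n)) :
    MvPolynomial (SSVar n) K :=
  Pfaffian ((Uss K n).submatrix (fun s => R.orderEmbOfFin rfl s) fun t => R.orderEmbOfFin rfl t)

/-- The ideal `I^ss_z`, generated by the Pfaffians `pf(U^ss_{RR})` over all nonempty
even-size `R ⊆ [n]` such that `R ⊆ [i]` and `|R ∩ [j]| > r_z(i,j)` for some `i ≥ j`. -/
noncomputable def IssIdeal (K : Type*) [Field K] (n : ℕ) (z : Equiv.Perm ℕ) :
    Ideal (MvPolynomial (SSVar n) K) :=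
  Ideal.span {f : MvPolynomial (SSVar n) K | ∃ R : Finset (Fin n),
    R.Nonempty ∧ Even R.card ∧
    (∃ i j : ℕ, 1 ≤ j ∧ j ≤ i ∧ i ≤ n ∧ (∀ a ∈ R, (a : ℕ) + 1 ≤ i) ∧
      rnk z i j < (R.filter fun a : Fin n => (a : ℕ) + 1 ≤ j).card) ∧
    f = pfUss K R}

/-- The square-free monomial `u^ss_{AB}`: zero if `A ⊙ B` meets the diagonal, and otherwise
the product of the variables `u_{ij}` over the pairs `i > j` with `(i,j)` or `(j,i)` in
`A ⊙ B = {(a_0, b_r), (a_1, b_{r-1}), ..., (a_r, b_0)}`. -/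
noncomputable def ussMon (K : Type*) [CommRing K] {n : ℕ} (A B : Finset (Fin n)) :
    MvPolynomial (SSVar n) K :=
  if h : A.card = B.card then
    if ∃ t : Fin A.card, (A.orderEmbOfFin rfl t : Fin n) = B.orderEmbOfFin h.symm t.rev then 0
    else
      ∏ v ∈ Finset.univ.filter (fun v : SSVar n => ∃ t : Fin A.card,
          (A.orderEmbOfFin rfl t = v.1.1 ∧ B.orderEmbOfFin h.symm t.rev = v.1.2) ∨
          (A.orderEmbOfFin rfl t = v.1.2 ∧ B.orderEmbOfFin h.symm t.rev = v.1.1)),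
        MvPolynomial.X v
  else 0

/-- The monomial ideal `J^ss_r` of a symmetric rank table `r`, generated by the monomials
`u^ss_{AB}` with `A ⊆ [i]`, `B ⊆ [j]`, `|A| = |B| = r(i,j) + 1` for some `n ≥ i ≥ j ≥ 1`. -/
noncomputable def JssIdealOfTable (K : Type*) [CommRing K] (n : ℕ) (r : ℕ → ℕ → ℕ) :
    Ideal (MvPolynomial (SSVar n) K) :=
  Ideal.span {g : MvPolynomial (SSVar n) K | ∃ (i j : ℕ) (A B : Finset (Fin n)),
    1 ≤ j ∧ j ≤ i ∧ i ≤ n ∧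
    (∀ a ∈ A, (a : ℕ) + 1 ≤ i) ∧ (∀ b ∈ B, (b : ℕ) + 1 ≤ j) ∧
    A.card = r i j + 1 ∧ B.card = r i j + 1 ∧ g = ussMon K A B}

/-- `J^ss_z = J^ss_{r_z}`. -/
noncomputable def JssIdeal (K : Type*) [CommRing K] (n : ℕ) (z : Equiv.Perm ℕ) :
    Ideal (MvPolynomial (SSVar n) K) :=
  JssIdealOfTable K n (rnk z)

/-- Total degree of a monomial (exponent vector). -/
def totalDeg {σ : Type*} (m : σ →₀ ℕ) : ℕ := m.sum fun _ e => e

/-- The lexicographic order on the variables `u_{ij}` by the pair `(i, j)`. -/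
def varLT {n : ℕ} (v w : SSVar n) : Prop :=
  v.1.1 < w.1.1 ∨ (v.1.1 = w.1.1 ∧ v.1.2 < w.1.2)

/-- The (graded) reverse lexicographic term order on monomials of `R_n`:
`m₁ < m₂` iff `deg m₁ < deg m₂`, or the degrees agree and the lexicographically largest
variable with different exponents has strictly larger exponent in `m₁`. -/
def revlexLT {n : ℕ} (m₁ m₂ : SSVar n →₀ ℕ) : Prop :=
  totalDeg m₁ < totalDeg m₂ ∨
    (totalDeg m₁ = totalDeg m₂ ∧ ∃ v, m₂ v < m₁ v ∧ ∀ w, varLT v w → m₁ w = m₂ w)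

/-- The initial ideal of `I` with respect to a strict term order `lt`: the ideal
generated by the leading monomials `init(f)` of the nonzero `f ∈ I`. -/
noncomputable def initIdeal {K : Type*} [CommRing K] {σ : Type*}
    (lt : (σ →₀ ℕ) → (σ →₀ ℕ) → Prop) (I : Ideal (MvPolynomial σ K)) :
    Ideal (MvPolynomial σ K) :=
  Ideal.span {g : MvPolynomial σ K | ∃ f ∈ I, f ≠ 0 ∧ ∃ m : σ →₀ ℕ, m ∈ f.support ∧
    (∀ m' ∈ f.support, m' ≠ m → lt m' m) ∧ g = MvPolynomial.monomial m (1 : K)}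

/-- A term order on the monomials of a polynomial ring: a linear order in which `1` is
the unique minimum and multiplication by a fixed monomial preserves order. -/
structure TermOrder (σ : Type*) where
  le : (σ →₀ ℕ) → (σ →₀ ℕ) → Prop
  trans : ∀ a b c, le a b → le b c → le a c
  antisymm : ∀ a b, le a b → le b a → a = b
  total : ∀ a b, le a b ∨ le b a
  zero_le : ∀ a, le 0 a
  add_le_add_right : ∀ a b c, le a b → le (a + c) (b + c)

/-- The initial ideal of `I` with respect to a term order `τ`. -/
noncomputable def initIdealLe {K : Type*} [CommRing K] {σ : Type*}
    (τ : TermOrder σ) (I : Ideal (MvPolynomial σ K)) : Ideal (MvPolynomial σ K) :=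
  Ideal.span {g : MvPolynomial σ K | ∃ f ∈ I, f ≠ 0 ∧ ∃ m : σ →₀ ℕ, m ∈ f.support ∧
    (∀ m' ∈ f.support, τ.le m' m) ∧ g = MvPolynomial.monomial m (1 : K)}

/-- An ideal is homogeneous (w.r.t. total degree) iff it contains all homogeneous
components of its elements. -/
def IsHomogIdeal {K : Type*} [CommSemiring K] {σ : Type*}
    (I : Ideal (MvPolynomial σ K)) : Prop :=
  ∀ f ∈ I, ∀ d : ℕ, MvPolynomial.homogeneousComponent d f ∈ I

/-- The reading order on boxes: rows top to bottom, each row right to left. -/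
def pdRel (p q : ℕ × ℕ) : Prop := p.1 < q.1 ∨ (p.1 = q.1 ∧ q.2 ≤ p.2)

instance : DecidableRel pdRel := fun p q => by unfold pdRel; infer_instance

instance : IsTrans (ℕ × ℕ) pdRel :=
  ⟨fun a b c hab hbc => by unfold pdRel at *; omega⟩

instance : IsAntisymm (ℕ × ℕ) pdRel :=
  ⟨fun a b hab hba => by
    unfold pdRel at hab hba
    exact Prod.ext_iff.mpr ⟨by omega, by omega⟩⟩

instance : IsTotal (ℕ × ℕ) pdRel :=
  ⟨fun a b => by unfold pdRel; omega⟩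

/-- The pipe dream reading word of a finite set `D` of boxes: the letters `i + j - 1`
over `(i, j) ∈ D`, in the order making `(i, -j)` increase lexicographically. -/
def pdWord (D : Finset (ℕ × ℕ)) : List ℕ :=
  (D.sort pdRel).map fun p => p.1 + p.2 - 1

/-- The product `s_{i_1} s_{i_2} ⋯ s_{i_l}` of simple transpositions. -/
def wordProd (l : List ℕ) : Equiv.Perm ℕ :=
  (l.map fun i => Equiv.swap i (i + 1)).prod

/-- `l` is a reduced word for `w`: a minimal-length word of positive letters whose
product of simple transpositions is `w`. -/
def IsReducedWordOf (w : Equiv.Perm ℕ) (l : List ℕ) : Prop :=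
  (∀ a ∈ l, 1 ≤ a) ∧ wordProd l = w ∧
    ∀ l' : List ℕ, (∀ a ∈ l', 1 ≤ a) → wordProd l' = w → l.length ≤ l'.length

/-- The set `RP(w)` of reduced pipe dreams for `w`. -/
def RP (w : Equiv.Perm ℕ) : Set (Finset (ℕ × ℕ)) :=
  {D | (∀ p ∈ D, 1 ≤ p.1 ∧ 1 ≤ p.2) ∧ IsReducedWordOf w (pdWord D)}

/-- `I^FPF_m`: involutions in `S_∞` that are fixed-point-free on `[m]` and fix
all `i > m`. -/
def IFPFm (m : ℕ) : Set (Equiv.Perm ℕ) :=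
  {y | y 0 = 0 ∧ y * y = 1 ∧ (∀ i, 1 ≤ i → i ≤ m → y i ≠ i) ∧ ∀ i, m < i → y i = i}

/-- `z = FPF_m(y)`: `z` agrees with `y` on `[m]` and swaps `m + 2k - 1, m + 2k`
for all `k ≥ 1`. -/
def IsFPFStdOf (m : ℕ) (y z : Equiv.Perm ℕ) : Prop :=
  (∀ i, i ≤ m → z i = y i) ∧
    ∀ k : ℕ, z (m + 2 * k + 1) = m + 2 * k + 2 ∧ z (m + 2 * k + 2) = m + 2 * k + 1

/-- The set `FP(z)` of fpf-involution pipe dreams for `z ∈ I^FPF_∞`. -/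
def FP (z : Equiv.Perm ℕ) : Set (Finset (ℕ × ℕ)) :=
  {E | ∃ (m : ℕ) (y : Equiv.Perm ℕ) (D : Finset (ℕ × ℕ)), Even m ∧ y ∈ IFPFm m ∧
    IsFPFStdOf m y z ∧ D ∈ RP y ∧ D.image Prod.swap = D ∧
    E = D.filter fun p => p.2 < p.1}

/-- The minor `det(U_{AB})` of the generic `m × n` matrix `U`, with rows `A` and
columns `B` listed in increasing order. -/
noncomputable def genMinor (K : Type*) [CommRing K] {m n : ℕ}
    (A : Finset (Fin m)) (B : Finset (Fin n)) (h : A.card = B.card) :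
    MvPolynomial (Fin m × Fin n) K :=
  (Matrix.of fun s t : Fin A.card =>
    (MvPolynomial.X (A.orderEmbOfFin rfl s, B.orderEmbOfFin h.symm t) :
      MvPolynomial (Fin m × Fin n) K)).det

/-- The antidiagonal monomial `u_{AB} = ∏_{(a,b) ∈ A ⊙ B} u_{ab}`. -/
noncomputable def genMon (K : Type*) [CommRing K] {m n : ℕ}
    (A : Finset (Fin m)) (B : Finset (Fin n)) (h : A.card = B.card) :
    MvPolynomial (Fin m × Fin n) K :=
  ∏ t : Fin A.card, MvPolynomial.X (A.orderEmbOfFin rfl t, B.orderEmbOfFin h.symm t.rev)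

/-- The exponent vector of the antidiagonal monomial `u_{AB}`. -/
noncomputable def antidiagExp {m n : ℕ} (A : Finset (Fin m)) (B : Finset (Fin n))
    (h : A.card = B.card) : (Fin m × Fin n) →₀ ℕ :=
  ∑ t : Fin A.card, Finsupp.single (A.orderEmbOfFin rfl t, B.orderEmbOfFin h.symm t.rev) 1

/-- The ideal `I_w`, generated by the minors `det(U_{AB})` with `A ⊆ [i]`, `B ⊆ [j]`,
`|A| = |B| = r_w(i,j) + 1` for some `(i,j) ∈ [m] × [n]`. -/
noncomputable def IwIdeal (K : Type*) [Field K] (m n : ℕ) (w : Equiv.Perm ℕ) :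
    Ideal (MvPolynomial (Fin m × Fin n) K) :=
  Ideal.span {g : MvPolynomial (Fin m × Fin n) K |
    ∃ (i j : ℕ) (A : Finset (Fin m)) (B : Finset (Fin n)) (h : A.card = B.card),
      1 ≤ i ∧ i ≤ m ∧ 1 ≤ j ∧ j ≤ n ∧ (∀ a ∈ A, (a : ℕ) + 1 ≤ i) ∧
      (∀ b ∈ B, (b : ℕ) + 1 ≤ j) ∧ A.card = rnk w i j + 1 ∧ g = genMinor K A B h}

/-- The monomial ideal `J_w`, generated by the monomials `u_{AB}` with `A ⊆ [i]`,
`B ⊆ [j]`, `|A| = |B| = r_w(i,j) + 1` for some `(i,j) ∈ [m] × [n]`. -/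
noncomputable def JwIdeal (K : Type*) [Field K] (m n : ℕ) (w : Equiv.Perm ℕ) :
    Ideal (MvPolynomial (Fin m × Fin n) K) :=
  Ideal.span {g : MvPolynomial (Fin m × Fin n) K |
    ∃ (i j : ℕ) (A : Finset (Fin m)) (B : Finset (Fin n)) (h : A.card = B.card),
      1 ≤ i ∧ i ≤ m ∧ 1 ≤ j ∧ j ≤ n ∧ (∀ a ∈ A, (a : ℕ) + 1 ≤ i) ∧
      (∀ b ∈ B, (b : ℕ) + 1 ≤ j) ∧ A.card = rnk w i j + 1 ∧ g = genMon K A B h}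

/-- The matrix Schubert variety
`X_w = {A ∈ Mat_{m×n} : rank A_{[i][j]} ≤ r_w(i,j) for all (i,j) ∈ [m] × [n]}`. -/
noncomputable def Xw (K : Type*) [Field K] (m n : ℕ) (w : Equiv.Perm ℕ) :
    Set (Matrix (Fin m) (Fin n) K) :=
  {A | ∀ (i j : ℕ) (hi : i ≤ m) (hj : j ≤ n), 1 ≤ i → 1 ≤ j →
    (A.submatrix (Fin.castLE hi) (Fin.castLE hj)).rank ≤ rnk w i j}

/-- `I(X_w)`: the ideal of polynomials vanishing on `X_w`. -/
noncomputable def IXw (K : Type*) [Field K] (m n : ℕ) (w : Equiv.Perm ℕ) :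
    Ideal (MvPolynomial (Fin m × Fin n) K) :=
  vanishingIdeal (Xw K m n w) fun A v => A v.1 v.2

/-- The variable `u_{pq}` (with `1 ≤ q < p ≤ n`) of `R_n`. -/
def ssvar {n : ℕ} (p q : ℕ) (hp : p ≤ n) (hq : 1 ≤ q) (hqp : q < p) : SSVar n :=
  ⟨(⟨p - 1, by omega⟩, ⟨q - 1, by omega⟩), Fin.mk_lt_mk.mpr (by omega)⟩

/-- Index set for the variables `u_{ij}`, `i > j ≥ 1`, over all positive integers. -/
abbrev PVar : Type := {p : ℕ × ℕ // 1 ≤ p.2 ∧ p.2 < p.1}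

/-- The generic skew-symmetric array `U^ss` over the positive integers:
`u_{xy}` if `x > y`, `-u_{yx}` if `x < y`, `0` if `x = y`. -/
noncomputable def UssP (K : Type*) [CommRing K] (x y : ℕ) : MvPolynomial PVar K :=
  if h : 1 ≤ y ∧ y < x then MvPolynomial.X ⟨(x, y), h⟩
  else if h' : 1 ≤ x ∧ x < y then -MvPolynomial.X ⟨(y, x), h'⟩
  else 0

/-- `pf(U^ss_{RR})` for a finite set `R` of positive integers. -/
noncomputable def pfUssP (K : Type*) [CommRing K] (R : Finset ℕ) : MvPolynomial PVar K :=
  Pfaffian (Matrix.of fun s t : Fin R.card =>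
    UssP K (R.orderEmbOfFin rfl s) (R.orderEmbOfFin rfl t))

/-- `g_{AB}`: the Pfaffian of the `(|B|+|A|) × (|B|+|A|)` skew-symmetric matrix whose
rows and columns are labeled by `B` (increasing) followed by `A` (increasing), with
entry `U^ss_{xy}` at a position labeled `(x, y)`, except that the entry is `0` when
both labels come from the `A`-block. -/
noncomputable def gAB (K : Type*) [CommRing K] (A B : Finset ℕ) : MvPolynomial PVar K :=
  Pfaffian ((Matrix.of fun p q : Fin B.card ⊕ Fin A.card =>
      match p, q with
      | Sum.inl s, Sum.inl t => UssP K (B.orderEmbOfFin rfl s) (B.orderEmbOfFin rfl t)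
      | Sum.inl s, Sum.inr t => UssP K (B.orderEmbOfFin rfl s) (A.orderEmbOfFin rfl t)
      | Sum.inr s, Sum.inl t => UssP K (A.orderEmbOfFin rfl s) (B.orderEmbOfFin rfl t)
      | Sum.inr _, Sum.inr _ => (0 : MvPolynomial PVar K)).submatrix
    finSumFinEquiv.symm finSumFinEquiv.symm)

/-- The exponent of the sign `⟨T, S⟩ = (-1)^{|S||T| + C(|S|,2) + ∑ of the (1-indexed)
positions in the increasing enumeration of `T` occupied by elements of `S`}`. -/
def setSgnExp (T S : Finset ℕ) : ℕ :=
  S.card * T.card + Nat.choose S.card 2 +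
    ∑ t : Fin T.card, if T.orderEmbOfFin rfl t ∈ S then (t : ℕ) + 1 else 0

/-!
Call a monomial standard if it lies outside `J_w`, that is, if the longest antidiagonal in its
support inside each `[i] × [j]` has length at most `r_w(i,j)`. Division by the minors, whose initial
terms generate `J_w`, rewrites every polynomial modulo `I_w` as a combination of standard monomials.
On the other side `I_w ⊆ I(X_w) ⊆ P_w`, where `P_w` is the kernel of the parametrization
`(x, y) ↦ x w y` of the orbit of `w` under lower and upper triangular matrices, hence is prime. So
everything follows once the standard monomials are linearly independent modulo `P_w`.

Independence is proved by induction on the sum of the ranks `r_w(i,j)`. Let `(p, q)` be the topmost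
nonzero entry of `w` in `[m] × [n]`. A standard monomial not divisible by `u_{pq}` is standard for
some `w (p r)` with `p < r` and `w(p) < w(r)`. The matrix of `w (p r)` is a limit of points of the
orbit of `w`, so `P_w ⊆ P_{w (p r)}`, and `u_{pq} ∈ P_{w (p r)}`. Given `f ∈ P_w` with standard
monomials only, the part of `f` free of `u_{pq}` thus lies in `P_{w (p r)}` for the `r` attached to
its leading monomial, and induction forces it to vanish. Hence `u_{pq}` divides `f`; cancel it, as
`P_w` is prime, and descend on the degree.
-/

section AntidiagLength

/-- The length of the longest antidiagonal chain of `S`, i.e. of the longest sequence of points of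
`S` with strictly decreasing row and strictly increasing column, among the points with row `< i`
and column in `[c, j)`. The recursion decides whether the last row is used, and in which column. -/
def antidiagLength (S : Finset (ℕ × ℕ)) : ℕ → ℕ → ℕ → ℕ
  | 0, _, _ => 0
  | i + 1, c, j => max (antidiagLength S i c j)
      (((Finset.Ico c j).filter fun b => (i, b) ∈ S).sup fun b => antidiagLength S i (b + 1) j + 1)

variable {S T : Finset (ℕ × ℕ)} {i i' j j' a b c c' k : ℕ}

theorem antidiagLength_succ_le_iff :
    antidiagLength S (i + 1) c j ≤ k ↔ antidiagLength S i c j ≤ k ∧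
      ∀ b, c ≤ b → b < j → (i, b) ∈ S → antidiagLength S i (b + 1) j + 1 ≤ k := by
  rw [antidiagLength, max_le_iff, Finset.sup_le_iff]
  simp only [Finset.mem_filter, Finset.mem_Ico, and_imp]

theorem antidiagLength_le_succ : antidiagLength S i c j ≤ antidiagLength S (i + 1) c j :=
  (antidiagLength_succ_le_iff.1 le_rfl).1

theorem antidiagLength_add_one_le_succ (hcb : c ≤ b) (hbj : b < j) (hb : (i, b) ∈ S) :
    antidiagLength S i (b + 1) j + 1 ≤ antidiagLength S (i + 1) c j :=
  (antidiagLength_succ_le_iff.1 le_rfl).2 b hcb hbj hb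

theorem antidiagLength_succ_eq_or (S : Finset (ℕ × ℕ)) (i c j : ℕ) :
    antidiagLength S (i + 1) c j = antidiagLength S i c j ∨ ∃ b, c ≤ b ∧ b < j ∧ (i, b) ∈ S ∧
      antidiagLength S (i + 1) c j = antidiagLength S i (b + 1) j + 1 := by
  rcases ((Finset.Ico c j).filter fun b => (i, b) ∈ S).eq_empty_or_nonempty with h | h
  · left
    rw [antidiagLength, h, Finset.sup_empty, bot_eq_zero, Nat.max_zero]
  · obtain ⟨b, hb, hsup⟩ := Finset.exists_mem_eq_sup _ h fun b => antidiagLength S i (b + 1) j + 1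
    simp only [Finset.mem_filter, Finset.mem_Ico] at hb
    rw [antidiagLength, hsup]
    exact (max_choice _ _).imp_right fun h => ⟨b, hb.1.1, hb.1.2, hb.2, h⟩

theorem antidiagLength_mono (hST : S ⊆ T) (hc : c' ≤ c) (hj : j ≤ j') :
    antidiagLength S i c j ≤ antidiagLength T i c' j' := by
  induction i generalizing c c' with
  | zero => exact le_rfl
  | succ i ih =>
    refine antidiagLength_succ_le_iff.2 ⟨(ih hc).trans antidiagLength_le_succ,
      fun b hcb hbj hb => ?_⟩
    exact (Nat.succ_le_succ (ih le_rfl)).trans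
      (antidiagLength_add_one_le_succ (hc.trans hcb) (hbj.trans_le hj) (hST hb))

theorem antidiagLength_mono_row (hi : i ≤ i') : antidiagLength S i c j ≤ antidiagLength S i' c j :=
  monotone_nat_of_le_succ (f := (antidiagLength S · c j)) (fun _ => antidiagLength_le_succ) hi

theorem antidiagLength_succ_row_le :
    antidiagLength S (i + 1) c j ≤ antidiagLength S i c j + 1 :=
  antidiagLength_succ_le_iff.2 ⟨Nat.le_succ _, fun _ hcb _ _ =>
    Nat.succ_le_succ (antidiagLength_mono subset_rfl (Nat.le_succ_of_le hcb) le_rfl)⟩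

theorem antidiagLength_eq_zero_of_le (h : j ≤ c) : antidiagLength S i c j = 0 := by
  induction i with
  | zero => rfl
  | succ i ih =>
    exact Nat.le_zero.1 (antidiagLength_succ_le_iff.2 ⟨ih.le, fun b hcb hbj _ => by omega⟩)

theorem antidiagLength_succ_column_le :
    antidiagLength S i c (j + 1) ≤ antidiagLength S i c j + 1 := by
  induction i generalizing c with
  | zero => exact Nat.zero_le _
  | succ i ih =>
    refine antidiagLength_succ_le_iff.2
      ⟨ih.trans (Nat.succ_le_succ antidiagLength_le_succ), fun b hcb hbj hb => ?_⟩
    rcases Nat.lt_succ_iff_lt_or_eq.1 hbj with hbj | rfl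
    · exact Nat.succ_le_succ (ih.trans (antidiagLength_add_one_le_succ hcb hbj hb))
    · rw [antidiagLength_eq_zero_of_le le_rfl]
      exact Nat.le_add_left _ _

theorem one_le_antidiagLength (h : (a, b) ∈ S) (ha : a < i) (hcb : c ≤ b) (hbj : b < j) :
    1 ≤ antidiagLength S i c j :=
  (Nat.le_add_left 1 _).trans
    ((antidiagLength_add_one_le_succ hcb hbj h).trans (antidiagLength_mono_row ha))

theorem exists_antidiagChain (hk : k ≤ antidiagLength S i c j) :
    ∃ row col : Fin k → ℕ, StrictAnti row ∧ StrictMono col ∧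
      ∀ t, (row t, col t) ∈ S ∧ row t < i ∧ c ≤ col t ∧ col t < j := by
  induction i generalizing c k with
  | zero =>
    obtain rfl := Nat.le_zero.1 hk
    exact ⟨Fin.elim0, Fin.elim0, Subsingleton.strictAnti _, Subsingleton.strictMono _, nofun⟩
  | succ i ih =>
    rcases antidiagLength_succ_eq_or S i c j with h | ⟨b, hcb, hbj, hb, h⟩
    · obtain ⟨row, col, hrow, hcol, hmem⟩ := ih (hk.trans_eq h)
      exact ⟨row, col, hrow, hcol, fun t => (hmem t).imp_right (.imp_left Nat.lt_succ_of_lt)⟩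
    · rcases k with _ | k
      · exact ⟨Fin.elim0, Fin.elim0, Subsingleton.strictAnti _, Subsingleton.strictMono _, nofun⟩
      obtain ⟨row, col, hrow, hcol, hmem⟩ := ih (Nat.succ_le_succ_iff.1 (hk.trans_eq h))
      refine ⟨Fin.cons i row, Fin.cons b col, ?_, ?_, ?_⟩
      · exact (Fin.liftFun_cons (· > ·)).2 ⟨fun t => (hmem t).2.1, hrow⟩
      · exact Fin.strictMono_cons.2 ⟨fun t => (hmem t).2.2.1, hcol⟩
      · refine Fin.cases ⟨hb, Nat.lt_succ_self i, hcb, hbj⟩ fun t => ?_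
        obtain ⟨hS, hi, hc, hj⟩ := hmem t
        exact ⟨hS, hi.trans (Nat.lt_succ_self i), (hcb.trans b.le_succ).trans hc, hj⟩

theorem antidiagLength_add_le_of_le_column (hcb : c ≤ b) (hbj : b ≤ j) (hj : j ≤ j') :
    antidiagLength S i c j' + antidiagLength S i b j ≤
      antidiagLength S i c j + antidiagLength S i b j' := by
  induction i generalizing b c with
  | zero => exact le_rfl
  | succ i ih =>
    have row_c := antidiagLength_le_succ (S := S) (i := i) (c := c) (j := j)
    have row_b := antidiagLength_le_succ (S := S) (i := i) (c := b) (j := j')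
    rcases antidiagLength_succ_eq_or S i c j' with h | ⟨x, hcx, hxj, hx, h⟩ <;>
      rcases antidiagLength_succ_eq_or S i b j with h' | ⟨y, hby, hyj, hy, h'⟩
    · have := ih hcb hbj
      omega
    · have := ih (c := c) (b := y + 1) (by omega) hyj
      have := antidiagLength_add_one_le_succ hby (hyj.trans_le hj) hy
      omega
    · rcases lt_or_ge x b with hxb | hbx
      · have := ih (c := x + 1) hxb hbj
        have := antidiagLength_add_one_le_succ hcx (hxb.trans_le hbj) hx
        omega
      · have := antidiagLength_mono (S := S) (i := i) subset_rfl hcb (le_refl j)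
        have := antidiagLength_add_one_le_succ hbx hxj hx
        omega
    · rcases le_or_gt x y with hxy | hyx
      · have := ih (c := x + 1) (b := y + 1) (by omega) hyj
        have := antidiagLength_add_one_le_succ hcx (hxy.trans_lt hyj) hx
        have := antidiagLength_add_one_le_succ hby (hyj.trans_le hj) hy
        omega
      · have := antidiagLength_add_one_le_succ (hby.trans hyx.le) hxj hx
        have := antidiagLength_add_one_le_succ (hcb.trans hby) hyj hy
        omega

theorem antidiagLength_add_le (hi : i ≤ i') (hcb : c ≤ b) (hbj : b ≤ j) (hj : j ≤ j') :
    antidiagLength S i c j' + antidiagLength S i' b j ≤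
      antidiagLength S i c j + antidiagLength S i' b j' := by
  induction i', hi using Nat.le_induction generalizing b with
  | base => exact antidiagLength_add_le_of_le_column hcb hbj hj
  | succ i' _ ih =>
    rcases antidiagLength_succ_eq_or S i' b j with h | ⟨x, hbx, hxj, hx, h⟩
    · have := ih hcb hbj
      have := antidiagLength_le_succ (S := S) (i := i') (c := b) (j := j')
      omega
    · have := ih (b := x + 1) (by omega) hxj
      have := antidiagLength_add_one_le_succ hbx (hxj.trans_le hj) hx
      omega

end AntidiagLength

section RankFunction

variable {w : Equiv.Perm ℕ} {i i' j j' p q r : ℕ}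

theorem perm_apply_pos (w0 : w 0 = 0) {a : ℕ} (ha : 0 < a) : 0 < w a :=
  Nat.pos_of_ne_zero fun h => ha.ne' (w.injective (h.trans w0.symm))

theorem inv_apply_zero (w0 : w 0 = 0) : w⁻¹ 0 = 0 :=
  Equiv.Perm.inv_eq_iff_eq.2 w0.symm

theorem mul_swap_apply_zero (w0 : w 0 = 0) (hp : 0 < p) (hr : 0 < r) :
    (w * Equiv.swap p r) 0 = 0 := by
  rw [Equiv.Perm.mul_apply, Equiv.swap_apply_of_ne_of_ne hp.ne hr.ne, w0]

theorem rnk_succ_left (w0 : w 0 = 0) (i j : ℕ) :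
    rnk w (i + 1) j = rnk w i j + if w (i + 1) ≤ j then 1 else 0 := by
  have hpos : 1 ≤ w (i + 1) := perm_apply_pos w0 i.succ_pos
  rw [rnk, rnk, ← Finset.insert_Icc_right_eq_Icc_add_one (by omega), Finset.filter_insert]
  simp only [Finset.mem_Icc, hpos, true_and]
  split_ifs
  · rw [Finset.card_insert_of_notMem (by simp)]
  · rfl

theorem rnk_inv (w : Equiv.Perm ℕ) (i j : ℕ) : rnk w⁻¹ j i = rnk w i j := by
  refine (Finset.card_nbij' w ⇑w⁻¹ ?_ ?_ ?_ ?_).symm <;>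
    simp +contextual [Set.MapsTo, Set.LeftInvOn]

theorem rnk_mono (w : Equiv.Perm ℕ) (hi : i ≤ i') (hj : j ≤ j') : rnk w i j ≤ rnk w i' j' := by
  refine Finset.card_le_card fun a ha => ?_
  simp only [Finset.mem_filter, Finset.mem_Icc] at ha ⊢
  omega

theorem rnk_eq_zero_of_pivot (w0 : w 0 = 0) (hpq : w (p + 1) = q + 1)
    (hrnk : rnk w (p + 1) (q + 1) = 1) (hi : i ≤ p + 1) (hj : j ≤ q + 1)
    (hne : ¬ (i = p + 1 ∧ j = q + 1)) : rnk w i j = 0 := by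
  have above : rnk w p (q + 1) = 0 := by
    rwa [rnk_succ_left w0, hpq, if_pos le_rfl, Nat.add_eq_right] at hrnk
  have left : rnk w (p + 1) q = 0 := by
    rw [rnk_succ_left w0, hpq, if_neg q.not_succ_le_self]
    exact Nat.le_zero.1 ((rnk_mono w le_rfl q.le_succ).trans_eq above)
  rcases hi.lt_or_eq with hi | rfl
  · exact Nat.le_zero.1 ((rnk_mono w (Nat.le_of_lt_succ hi) hj).trans_eq above)
  · exact Nat.le_zero.1 ((rnk_mono w le_rfl (by omega)).trans_eq left)

theorem rnk_mul_swap (w0 : w 0 = 0) (hp : 0 < p) (hpr : p < r) (hw : w p < w r) (i j : ℕ) :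
    rnk w i j = rnk (w * Equiv.swap p r) i j +
      if p ≤ i ∧ i < r ∧ w p ≤ j ∧ j < w r then 1 else 0 := by
  have v0 := mul_swap_apply_zero w0 hp (hp.trans hpr)
  induction i with
  | zero => simp [rnk, hp.ne']
  | succ i ih =>
    rw [rnk_succ_left w0, rnk_succ_left v0, ih, Equiv.Perm.mul_apply]
    rcases eq_or_ne (i + 1) p with rfl | hip
    · rw [Equiv.swap_apply_left]
      grind
    · rcases eq_or_ne (i + 1) r with rfl | hir
      · rw [Equiv.swap_apply_right]
        grind
      · rw [Equiv.swap_apply_of_ne_of_ne hip hir]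
        grind

theorem rnk_add_rnk_eq (w0 : w 0 = 0) (hi : i ≤ i') (hj : j' ≤ j)
    (hempty : ∀ a, i < a → a ≤ i' → w a ≤ j → w a ≤ j') :
    rnk w i' j + rnk w i j' = rnk w i j + rnk w i' j' := by
  induction i', hi using Nat.le_induction with
  | base => rfl
  | succ i' hi ih =>
    have step := hempty (i' + 1) (Nat.lt_succ_of_le hi) le_rfl
    have := ih fun a ha hai' => hempty a ha (Nat.le_succ_of_le hai')
    rw [rnk_succ_left w0, rnk_succ_left w0]
    split_ifs <;> omega

end RankFunction

section Bruhat

variable {w : Equiv.Perm ℕ} {ρ : ℕ → ℕ → ℕ} {i i' j j' p q : ℕ}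

theorem lt_rnk_of_forall_row_le (w0 : w 0 = 0) (hrow : ∀ i j, ρ (i + 1) j ≤ ρ i j + 1)
    (hgap : ρ p j < rnk w p j) (hpi : p ≤ i) (hw : ∀ a, p < a → a ≤ i → w a ≤ j) :
    ρ i j < rnk w i j := by
  induction i, hpi using Nat.le_induction with
  | base => exact hgap
  | succ i hpi ih =>
    have := ih fun a ha hai => hw a ha (Nat.le_succ_of_le hai)
    have := hrow i j
    rw [rnk_succ_left w0, if_pos (hw (i + 1) (Nat.lt_succ_of_le hpi) le_rfl)]
    omega

theorem lt_rnk_of_forall_column_le (w0 : w 0 = 0) (hcol : ∀ i j, ρ i (j + 1) ≤ ρ i j + 1)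
    (hgap : ρ p q < rnk w p q) (hqj : q ≤ j) (hw : ∀ b, q < b → b ≤ j → w⁻¹ b ≤ p) :
    ρ p j < rnk w p j := by
  rw [← rnk_inv] at hgap ⊢
  exact lt_rnk_of_forall_row_le (ρ := fun j i => ρ i j) (inv_apply_zero w0)
    (fun j i => hcol i j) hgap hqj hw

theorem eq_rnk_of_eq_rnk_of_eq_rnk (w0 : w 0 = 0)
    (hsuper : ∀ {i i' j j'}, i ≤ i' → j' ≤ j → ρ i j + ρ i' j' ≤ ρ i j' + ρ i' j)
    (hle : ∀ i j, ρ i j ≤ rnk w i j) (hi : i ≤ i') (hj : j' ≤ j)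
    (hempty : ∀ a, i < a → a ≤ i' → w a ≤ j → w a ≤ j')
    (htight : ρ i j = rnk w i j) (htight' : ρ i' j' = rnk w i' j') :
    ρ i j' = rnk w i j' := by
  have := rnk_add_rnk_eq w0 hi hj hempty
  have := hsuper hi hj
  have := hle i' j
  have := hle i j'
  omega

theorem exists_lt_and_lt_apply (w : Equiv.Perm ℕ) (p q : ℕ) : ∃ r, p < r ∧ q < w r := by
  by_contra! hne
  refine Set.Ioi_infinite p (Set.Finite.of_finite_image ((Set.finite_Iic q).subset ?_)
    w.injective.injOn)
  rintro _ ⟨r, hr, rfl⟩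
  exact hne r hr

/-- If equality `ρ = rnk w` never occurs southeast of `(p, q)` above the first row `firstSE` with a
point of `w` southeast of `(p, q)`, that point works. Otherwise take the leftmost column `j` with
such an equality, and the topmost point of `w` southeast of `(p, q)` in the columns up to `j`: an
equality inside its rectangle would by `eq_rnk_of_eq_rnk_of_eq_rnk` give one left of `j`. -/
theorem exists_forall_lt_rnk (w0 : w 0 = 0)
    (hrow : ∀ i j, ρ (i + 1) j ≤ ρ i j + 1) (hcol : ∀ i j, ρ i (j + 1) ≤ ρ i j + 1)
    (hsuper : ∀ {i i' j j'}, i ≤ i' → j' ≤ j → ρ i j + ρ i' j' ≤ ρ i j' + ρ i' j)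
    (hle : ∀ i j, ρ i j ≤ rnk w i j) (hgap : ρ p q < rnk w p q) :
    ∃ r, p < r ∧ q < w r ∧ ∀ i j, p ≤ i → i < r → q ≤ j → j < w r → ρ i j < rnk w i j := by
  classical
  let firstSE := Nat.find (exists_lt_and_lt_apply w p q)
  obtain ⟨hp_first, hq_first⟩ := Nat.find_spec (exists_lt_and_lt_apply w p q)
  have first_min : ∀ a, p < a → a < firstSE → w a ≤ q := fun a hpa ha =>
    not_lt.1 fun hqa => Nat.find_min _ ha ⟨hpa, hqa⟩
  by_cases htight : ∃ j, q ≤ j ∧ ∃ i, p ≤ i ∧ i < firstSE ∧ ρ i j = rnk w i j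
  swap
  · push Not at htight
    exact ⟨firstSE, hp_first, hq_first, fun i j hpi hi hqj _ =>
      (hle i j).lt_of_ne (htight j hqj i hpi hi)⟩
  obtain ⟨hqj, i, hpi, hi, hij⟩ := Nat.find_spec htight
  set j := Nat.find htight
  have column_min : ∀ {i' j'}, p ≤ i' → i' < firstSE → q ≤ j' → j' < j → ρ i' j' ≠ rnk w i' j' :=
    fun hpi' hi' hqj' hj' heq => Nat.find_min htight hj' ⟨hqj', _, hpi', hi', heq⟩
  have hSE : ∃ r, p < r ∧ q < w r ∧ w r ≤ j := by
    by_contra! hnone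
    refine hij.not_lt (lt_rnk_of_forall_row_le w0 hrow ?_ hpi fun a hpa hai =>
      (first_min a hpa (hai.trans_lt hi)).trans hqj)
    refine lt_rnk_of_forall_column_le w0 hcol hgap hqj fun b hqb hbj => not_lt.1 fun hpb => ?_
    have := hnone (w⁻¹ b) hpb
    simp only [Equiv.Perm.inv_def, Equiv.apply_symm_apply] at this
    exact (this hqb).not_ge hbj
  obtain ⟨hpr, hqr, hrj⟩ := Nat.find_spec hSE
  refine ⟨Nat.find hSE, hpr, hqr, fun i' j' hpi' hi' hqj' hj' => (hle i' j').lt_of_ne fun heq => ?_⟩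
  have hfirst : firstSE ≤ i' := not_lt.1 fun h => column_min hpi' h hqj' (hj'.trans_le hrj) heq
  refine column_min hpi hi hqj' (hj'.trans_le hrj) (eq_rnk_of_eq_rnk_of_eq_rnk w0 hsuper hle
    (hi.le.trans hfirst) (hj'.le.trans hrj) (fun a hia hai' haj => not_lt.1 fun hj'a => ?_) hij heq)
  exact Nat.find_min hSE (hai'.trans_lt hi')
    ⟨hpi.trans_lt hia, hqj'.trans_lt hj'a, haj⟩

end Bruhat

section StandardMonomials

variable {m n : ℕ} {w : Equiv.Perm ℕ} {d e : Fin m × Fin n →₀ ℕ}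

/-- The positions of the variables dividing the monomial with exponent `d`, as a subset of the
infinite grid with `0`-indexed rows and columns. -/
noncomputable def supportPoints (d : Fin m × Fin n →₀ ℕ) : Finset (ℕ × ℕ) :=
  d.support.image (Prod.map (↑) (↑))

/-- The monomial with exponent `d` is standard for `w` if no antidiagonal chain of variables
dividing it violates a rank condition of `w`. These are the monomials outside `J_w`. -/
def IsStandard (w : Equiv.Perm ℕ) (d : Fin m × Fin n →₀ ℕ) : Prop :=
  ∀ i j, antidiagLength (supportPoints d) i 0 j ≤ rnk w i j

/-- The rows `A` and the columns `B` index one of the minors defining `I_w`. -/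
def IsDefiningMinor (w : Equiv.Perm ℕ) (A : Finset (Fin m)) (B : Finset (Fin n)) : Prop :=
  ∃ i j, 1 ≤ i ∧ i ≤ m ∧ 1 ≤ j ∧ j ≤ n ∧ (∀ a ∈ A, (a : ℕ) + 1 ≤ i) ∧
    (∀ b ∈ B, (b : ℕ) + 1 ≤ j) ∧ A.card = rnk w i j + 1

theorem mem_supportPoints {x : ℕ × ℕ} :
    x ∈ supportPoints d ↔ ∃ a b, d (a, b) ≠ 0 ∧ (↑a, ↑b) = x := by
  simp [supportPoints]

theorem IsStandard.mono (he : IsStandard w e) (hde : d ≤ e) : IsStandard w d := fun i j =>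
  (antidiagLength_mono (Finset.image_subset_image (Finsupp.support_mono hde)) le_rfl le_rfl).trans
    (he i j)

theorem sum_single_one_le {ι σ : Type*} [Fintype ι] {v : ι → σ} (hv : Function.Injective v)
    {d : σ →₀ ℕ} (hd : ∀ t, d (v t) ≠ 0) : ∑ t, Finsupp.single (v t) 1 ≤ d := by
  classical
  intro x
  rw [Finsupp.finsetSum_apply]
  by_cases hx : ∃ t, v t = x
  · obtain ⟨t, rfl⟩ := hx
    simpa [Finsupp.single_apply, hv.eq_iff] using Nat.one_le_iff_ne_zero.2 (hd t)
  · rw [Finset.sum_eq_zero fun t _ => Finsupp.single_eq_of_ne fun h => hx ⟨t, h.symm⟩]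
    exact Nat.zero_le _

theorem antidiagExp_eq_sum {k : ℕ} {A : Finset (Fin m)} {B : Finset (Fin n)} (hA : A.card = k)
    (hB : B.card = k) (h : A.card = B.card) :
    antidiagExp A B h =
      ∑ t, Finsupp.single (A.orderEmbOfFin hA t, B.orderEmbOfFin hB t.rev) 1 := by
  subst hA
  rfl

theorem antidiagExp_image {k : ℕ} {row : Fin k → Fin m} {col : Fin k → Fin n}
    (hrow : StrictAnti row) (hcol : StrictMono col)
    (h : (Finset.univ.image row).card = (Finset.univ.image col).card) :
    antidiagExp (Finset.univ.image row) (Finset.univ.image col) h =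
      ∑ t, Finsupp.single (row t, col t) 1 := by
  have hA : (Finset.univ.image row).card = k := by
    rw [Finset.card_image_of_injective _ hrow.injective, Finset.card_univ, Fintype.card_fin]
  have hB := h.symm.trans hA
  have row_eq : row ∘ Fin.rev = (Finset.univ.image row).orderEmbOfFin hA :=
    Finset.orderEmbOfFin_unique hA (fun t => Finset.mem_image_of_mem row (Finset.mem_univ _))
      (hrow.comp Fin.rev_strictAnti)
  have col_eq : col = (Finset.univ.image col).orderEmbOfFin hB :=
    Finset.orderEmbOfFin_unique hB (fun t => Finset.mem_image_of_mem col (Finset.mem_univ _)) hcol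
  rw [antidiagExp_eq_sum hA hB, ← row_eq, ← col_eq,
    ← Equiv.sum_comp Fin.revPerm fun t => Finsupp.single (row t, col t) 1]
  rfl

theorem exists_antidiagExp_le (hd : ¬ IsStandard w d) :
    ∃ (A : Finset (Fin m)) (B : Finset (Fin n)) (h : A.card = B.card),
      IsDefiningMinor w A B ∧ antidiagExp A B h ≤ d := by
  simp only [IsStandard, not_forall, not_le] at hd
  obtain ⟨i, j, hij⟩ := hd
  have hk : rnk w (min i m) (min j n) + 1 ≤ antidiagLength (supportPoints d) i 0 j :=
    (Nat.succ_le_succ (rnk_mono w (min_le_left _ _) (min_le_left _ _))).trans hij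
  obtain ⟨row, col, hrow, hcol, hmem⟩ := exists_antidiagChain hk
  choose a b hab heq using fun t => mem_supportPoints.1 (hmem t).1
  simp only [Prod.mk.injEq] at heq
  have ha : StrictAnti a := fun s t hst => by
    rw [Fin.lt_def, (heq s).1, (heq t).1]
    exact hrow hst
  have hb : StrictMono b := fun s t hst => by
    rw [Fin.lt_def, (heq s).2, (heq t).2]
    exact hcol hst
  have cardA : (Finset.univ.image a).card = rnk w (min i m) (min j n) + 1 := by
    rw [Finset.card_image_of_injective _ ha.injective, Finset.card_univ, Fintype.card_fin]
  have cardB : (Finset.univ.image b).card = rnk w (min i m) (min j n) + 1 := by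
    rw [Finset.card_image_of_injective _ hb.injective, Finset.card_univ, Fintype.card_fin]
  have hai : ∀ t, (a t : ℕ) + 1 ≤ min i m := fun t => by
    rw [(heq t).1]
    exact le_min (hmem t).2.1 ((heq t).1 ▸ (a t).2)
  have hbj : ∀ t, (b t : ℕ) + 1 ≤ min j n := fun t => by
    rw [(heq t).2]
    exact le_min (hmem t).2.2.2 ((heq t).2 ▸ (b t).2)
  refine ⟨Finset.univ.image a, Finset.univ.image b, cardA.trans cardB.symm,
    ⟨min i m, min j n, (Nat.le_add_left 1 _).trans (hai 0), min_le_right _ _,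
      (Nat.le_add_left 1 _).trans (hbj 0), min_le_right _ _, ?_, ?_, cardA⟩, ?_⟩
  · simpa using hai
  · simpa using hbj
  · rw [antidiagExp_image ha hb]
    exact sum_single_one_le (fun s t h => ha.injective (Prod.ext_iff.1 h).1) hab

theorem genMon_eq_monomial (K : Type*) [CommRing K] (A : Finset (Fin m)) (B : Finset (Fin n))
    (h : A.card = B.card) : genMon K A B h = MvPolynomial.monomial (antidiagExp A B h) 1 :=
  (MvPolynomial.monomial_sum_one _ _).symm

theorem monomial_mem_JwIdeal {K : Type*} [Field K] (hd : ¬ IsStandard w d) :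
    MvPolynomial.monomial d 1 ∈ JwIdeal K m n w := by
  obtain ⟨A, B, h, ⟨i, j, hi, him, hj, hjn, hA, hB, hcard⟩, hle⟩ := exists_antidiagExp_le hd
  have hgen : genMon K A B h ∈ JwIdeal K m n w :=
    Ideal.subset_span ⟨i, j, A, B, h, hi, him, hj, hjn, hA, hB, hcard, rfl⟩
  rw [genMon_eq_monomial] at hgen
  exact Ideal.mem_of_dvd _ (MvPolynomial.monomial_dvd_monomial.2 ⟨Or.inr hle, dvd_rfl⟩) hgen

theorem antidiagLength_supportPoints_eq_zero (w0 : w 0 = 0) {p : Fin m} {q : Fin n}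
    (hpq : w (p + 1) = q + 1) (hrnk : rnk w (p + 1) (q + 1) = 1) (hd : IsStandard w d)
    (hdpq : d (p, q) = 0) : antidiagLength (supportPoints d) (p + 1) 0 (q + 1) = 0 := by
  by_contra hne
  obtain ⟨row, col, -, -, hmem⟩ := exists_antidiagChain (Nat.one_le_iff_ne_zero.2 hne)
  obtain ⟨hS, hrow, -, hcol⟩ := hmem 0
  obtain ⟨a, b, hab, heq⟩ := mem_supportPoints.1 hS
  rw [← heq] at hS
  rw [← (Prod.mk.inj heq).1] at hrow
  rw [← (Prod.mk.inj heq).2] at hcol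
  have rank_pos : 1 ≤ rnk w (a + 1) (b + 1) :=
    (one_le_antidiagLength hS a.val.lt_succ_self b.val.zero_le b.val.lt_succ_self).trans (hd _ _)
  refine rank_pos.not_gt (Nat.lt_one_iff.2 (rnk_eq_zero_of_pivot w0 hpq hrnk hrow hcol ?_))
  rintro ⟨hap, hbq⟩
  rw [Fin.ext (Nat.succ_injective hap), Fin.ext (Nat.succ_injective hbq)] at hab
  exact hab hdpq

theorem IsStandard.exists_mul_swap (w0 : w 0 = 0) {p : Fin m} {q : Fin n}
    (hpq : w (p + 1) = q + 1) (hrnk : rnk w (p + 1) (q + 1) = 1) (hd : IsStandard w d)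
    (hdpq : d (p, q) = 0) :
    ∃ r, (p : ℕ) + 1 < r ∧ w (p + 1) < w r ∧ IsStandard (w * Equiv.swap ((p : ℕ) + 1) r) d := by
  have hgap := antidiagLength_supportPoints_eq_zero w0 hpq hrnk hd hdpq
  obtain ⟨r, hpr, hqr, hlt⟩ := exists_forall_lt_rnk
    (ρ := fun i j => antidiagLength (supportPoints d) i 0 j) w0
    (fun _ _ => antidiagLength_succ_row_le) (fun _ _ => antidiagLength_succ_column_le)
    (fun hi hj => antidiagLength_add_le hi le_rfl (Nat.zero_le _) hj) hd
    (hgap.trans_lt (one_pos.trans_eq hrnk.symm))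
  rw [← hpq] at hqr hlt
  refine ⟨r, hpr, hqr, fun i j => ?_⟩
  have hswap := rnk_mul_swap (p := p + 1) w0 (Nat.succ_pos p) hpr hqr i j
  have hle := hd i j
  split_ifs at hswap with h
  · have := hlt i j h.1 h.2.1 h.2.2.1 h.2.2.2
    omega
  · omega

end StandardMonomials

section GroebnerBasis

open scoped MonomialOrder

variable {K σ : Type*} [Field K] {o : MonomialOrder σ} {G : Set (MvPolynomial σ K)}
  {P : Ideal (MvPolynomial σ K)} {f : MvPolynomial σ K}
  {IsStd : (σ →₀ ℕ) → Prop}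

theorem exists_standard_remainder (hred : ∀ d, ¬ IsStd d → ∃ g ∈ G, g ≠ 0 ∧ o.degree g ≤ d)
    (f : MvPolynomial σ K) :
    ∃ r, f - r ∈ Ideal.span G ∧ o.degree r ≼[o] o.degree f ∧ ∀ d ∈ r.support, IsStd d := by
  obtain ⟨q, r, hf, hdeg, hr⟩ := o.div_set (B := {g ∈ G | g ≠ 0})
    (fun g hg => (o.leadingCoeff_ne_zero_iff.2 hg.2).isUnit) f
  rw [Finsupp.linearCombination_apply, Finsupp.sum] at hf
  refine ⟨r, ?_, ?_, fun d hd => ?_⟩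
  · rw [sub_eq_iff_eq_add.2 hf]
    exact Ideal.sum_mem _ fun g _ => Ideal.mul_mem_left _ _ (Ideal.subset_span g.2.1)
  · rw [← sub_eq_iff_eq_add'.2 hf]
    refine o.degree_sub_le.trans (sup_le le_rfl (o.degree_sum_le.trans ?_))
    refine Finset.sup_le fun g _ => ?_
    rw [smul_eq_mul, mul_comm]
    exact hdeg g
  · by_contra hstd
    obtain ⟨g, hg, hg0, hgd⟩ := hred d hstd
    exact hr d hd g ⟨hg, hg0⟩ hgd

theorem le_span_of_forall_eq_zero (hred : ∀ d, ¬ IsStd d → ∃ g ∈ G, g ≠ 0 ∧ o.degree g ≤ d)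
    (hG : G ⊆ P) (hind : ∀ f ∈ P, (∀ d ∈ f.support, IsStd d) → f = 0) : P ≤ Ideal.span G := by
  intro f hf
  obtain ⟨r, hfr, -, hr⟩ := exists_standard_remainder hred f
  have hrP : r ∈ P := by simpa using P.sub_mem hf (Ideal.span_le.2 hG hfr)
  rwa [hind r hrP hr, sub_zero] at hfr

theorem not_isStd_degree (hred : ∀ d, ¬ IsStd d → ∃ g ∈ G, g ≠ 0 ∧ o.degree g ≤ d)
    (hG : G ⊆ P) (hind : ∀ f ∈ P, (∀ d ∈ f.support, IsStd d) → f = 0)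
    (hf : f ∈ P) (hf0 : f ≠ 0) : ¬ IsStd (o.degree f) := by
  classical
  intro hstd
  rcases eq_or_ne (o.degree f) 0 with hdeg | hdeg
  · refine hf0 (hind f hf fun d hd => ?_)
    rw [o.eq_C_of_degree_eq_zero hdeg, MvPolynomial.C_apply] at hd
    rwa [Finset.mem_singleton.1 (MvPolynomial.support_monomial_subset hd), ← hdeg]
  obtain ⟨r, hr, hdegr, hrstd⟩ := exists_standard_remainder hred (o.subLTerm f)
  have r_lt : o.degree r ≺[o] o.degree f := hdegr.trans_lt (o.degree_sub_LTerm_lt hdeg)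
  have lead_add_mem : MvPolynomial.monomial (o.degree f) (o.leadingCoeff f) + r ∈ P := by
    have := P.sub_mem hf (Ideal.span_le.2 hG hr)
    rw [MonomialOrder.subLTerm] at this
    convert this using 1
    ring
  have lead_add_eq_zero := hind _ lead_add_mem fun d hd => by
    rcases Finset.mem_union.1 (MvPolynomial.support_add hd) with hd | hd
    · rwa [Finset.mem_singleton.1 (MvPolynomial.support_monomial_subset hd)]
    · exact hrstd d hd
  have := congrArg (MvPolynomial.coeff (o.degree f)) lead_add_eq_zero
  rw [MvPolynomial.coeff_add, MvPolynomial.coeff_monomial, if_pos rfl, o.coeff_eq_zero_of_lt r_lt,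
    add_zero, MvPolynomial.coeff_zero] at this
  exact o.leadingCoeff_ne_zero_iff.2 hf0 this

end GroebnerBasis

section TermOrder

variable {σ : Type*}

/-- The type of exponents, carrying the linear order of the term order `τ`. -/
def TermOrder.Syn (_ : TermOrder σ) : Type _ := σ →₀ ℕ

noncomputable instance (τ : TermOrder σ) : AddCommMonoid τ.Syn :=
  inferInstanceAs (AddCommMonoid (σ →₀ ℕ))

noncomputable instance (τ : TermOrder σ) : LinearOrder τ.Syn where
  le := τ.le
  le_refl a := (τ.total a a).elim id id
  le_trans := τ.trans
  le_antisymm := τ.antisymm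
  le_total := τ.total
  toDecidableLE := Classical.decRel _

instance (τ : TermOrder σ) : IsOrderedAddMonoid τ.Syn where
  add_le_add_left a b h c := τ.add_le_add_right a b c h

theorem TermOrder.le_of_le (τ : TermOrder σ) {a b : σ →₀ ℕ} (h : a ≤ b) : τ.le a b := by
  simpa [tsub_add_cancel_of_le h] using τ.add_le_add_right 0 (b - a) a (τ.zero_le _)

instance [Finite σ] (τ : TermOrder σ) : WellFoundedLT τ.Syn :=
  have : WellQuasiOrderedLE τ.Syn := ⟨fun f =>
    let ⟨i, j, hij, h⟩ := wellQuasiOrdered_le (α := σ →₀ ℕ) f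
    ⟨i, j, hij, τ.le_of_le h⟩⟩
  inferInstance

/-- A term order in finitely many variables is a monomial order: the well-foundedness is Dickson's
lemma. -/
noncomputable def TermOrder.toMonomialOrder [Finite σ] (τ : TermOrder σ) : MonomialOrder σ where
  syn := τ.Syn
  toSyn := { Equiv.refl (σ →₀ ℕ) with map_add' := fun _ _ => rfl }
  toSyn_monotone _ _ h := τ.le_of_le h

theorem TermOrder.degree_eq [Finite σ] (τ : TermOrder σ) {R : Type*} [CommSemiring R]
    {f : MvPolynomial σ R} {d : σ →₀ ℕ} (hd : d ∈ f.support) (hmax : ∀ e ∈ f.support, τ.le e d) :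
    τ.toMonomialOrder.degree f = d :=
  τ.antisymm _ _ (τ.toMonomialOrder.degree_le_iff.2 hmax) (τ.toMonomialOrder.le_degree hd)

end TermOrder

section AntidiagonalTermOrder

variable {K : Type*} [Field K] {m n : ℕ} {w : Equiv.Perm ℕ} {τ : TermOrder (Fin m × Fin n)}

/-- `τ` is an antidiagonal term order: the initial term of every minor of the generic matrix over
`K` is its antidiagonal monomial. -/
def IsAntidiagonal (K : Type*) [CommRing K] (τ : TermOrder (Fin m × Fin n)) : Prop :=
  ∀ (A : Finset (Fin m)) (B : Finset (Fin n)) (h : A.card = B.card),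
    antidiagExp A B h ∈ (genMinor K A B h).support ∧
      ∀ d ∈ (genMinor K A B h).support, τ.le d (antidiagExp A B h)

/-- The minors generating `I_w`. -/
def definingMinors (K : Type*) [CommRing K] (m n : ℕ) (w : Equiv.Perm ℕ) :
    Set (MvPolynomial (Fin m × Fin n) K) :=
  {g | ∃ (A : Finset (Fin m)) (B : Finset (Fin n)) (h : A.card = B.card),
    IsDefiningMinor w A B ∧ g = genMinor K A B h}

theorem IwIdeal_eq_span : IwIdeal K m n w = Ideal.span (definingMinors K m n w) := by
  refine congrArg Ideal.span (Set.ext fun g => ⟨?_, ?_⟩)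
  · rintro ⟨i, j, A, B, h, hi, him, hj, hjn, hA, hB, hcard, rfl⟩
    exact ⟨A, B, h, ⟨i, j, hi, him, hj, hjn, hA, hB, hcard⟩, rfl⟩
  · rintro ⟨A, B, h, ⟨i, j, hi, him, hj, hjn, hA, hB, hcard⟩, rfl⟩
    exact ⟨i, j, A, B, h, hi, him, hj, hjn, hA, hB, hcard, rfl⟩

theorem IsAntidiagonal.genMinor_ne_zero (hτ : IsAntidiagonal K τ) {A : Finset (Fin m)}
    {B : Finset (Fin n)} (h : A.card = B.card) : genMinor K A B h ≠ 0 :=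
  MvPolynomial.support_nonempty.1 ⟨_, (hτ A B h).1⟩

theorem IsAntidiagonal.exists_degree_le (hτ : IsAntidiagonal K τ) {d : Fin m × Fin n →₀ ℕ}
    (hd : ¬ IsStandard w d) :
    ∃ g ∈ definingMinors K m n w, g ≠ 0 ∧ τ.toMonomialOrder.degree g ≤ d := by
  obtain ⟨A, B, h, hAB, hle⟩ := exists_antidiagExp_le hd
  refine ⟨genMinor K A B h, ⟨A, B, h, hAB, rfl⟩, hτ.genMinor_ne_zero h, ?_⟩
  rwa [τ.degree_eq (hτ A B h).1 (hτ A B h).2]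

theorem IsAntidiagonal.JwIdeal_le (hτ : IsAntidiagonal K τ) :
    JwIdeal K m n w ≤ initIdealLe τ (IwIdeal K m n w) := by
  refine Ideal.span_le.2 ?_
  rintro _ ⟨i, j, A, B, h, hi, him, hj, hjn, hA, hB, hcard, rfl⟩
  exact Ideal.subset_span ⟨genMinor K A B h,
    Ideal.subset_span ⟨i, j, A, B, h, hi, him, hj, hjn, hA, hB, hcard, rfl⟩,
    hτ.genMinor_ne_zero h, antidiagExp A B h, (hτ A B h).1, (hτ A B h).2,
    genMon_eq_monomial K A B h⟩

theorem initIdealLe_le_JwIdeal {P : Ideal (MvPolynomial (Fin m × Fin n) K)}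
    (hP : ∀ f ∈ P, f ≠ 0 → ¬ IsStandard w (τ.toMonomialOrder.degree f)) :
    initIdealLe τ P ≤ JwIdeal K m n w := by
  refine Ideal.span_le.2 ?_
  rintro _ ⟨f, hf, hf0, d, hd, hmax, rfl⟩
  refine monomial_mem_JwIdeal ?_
  rw [← τ.degree_eq hd hmax]
  exact hP f hf hf0

end AntidiagonalTermOrder

section OrbitIdeal

variable {K : Type*} [Field K] {m n : ℕ} {w : Equiv.Perm ℕ}

/-- The `(i, j)` entry of the matrix `x * w * y`, where `x` is lower triangular, the permutation
matrix has its ones at the positions `(a, w a)`, and `y` is upper triangular. The entry of `y` in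
row `w a` and column `j` is written `y a j`. Such matrices fill a dense part of `X_w`. -/
def orbitEntry {R : Type*} [CommRing R] (w : Equiv.Perm ℕ) (x y : ℕ → ℕ → R) (i j : ℕ) : R :=
  ∑ a ∈ Finset.Icc 1 i with w a ∈ Finset.Icc 1 j, x i a * y a j

/-- The ideal of the closure of the set of matrices with entries `orbitEntry w x y`, defined as the
kernel of the pullback to polynomials in the entries of `x` and `y`. -/
noncomputable def orbitIdeal (K : Type*) [Field K] (m n : ℕ) (w : Equiv.Perm ℕ) :
    Ideal (MvPolynomial (Fin m × Fin n) K) :=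
  RingHom.ker (MvPolynomial.bind₁ (R := K) fun v : Fin m × Fin n =>
    orbitEntry w (fun i a => MvPolynomial.X (Sum.inl (i, a) : ℕ × ℕ ⊕ ℕ × ℕ))
      (fun a j => MvPolynomial.X (Sum.inr (a, j))) (v.1 + 1) (v.2 + 1))

instance orbitIdeal_isPrime : (orbitIdeal K m n w).IsPrime :=
  RingHom.ker_isPrime _

theorem mem_orbitIdeal [Infinite K] {f : MvPolynomial (Fin m × Fin n) K} :
    f ∈ orbitIdeal K m n w ↔ ∀ x y : ℕ → ℕ → K,
      MvPolynomial.eval (fun v => orbitEntry w x y (v.1 + 1) (v.2 + 1)) f = 0 := by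
  have eval_pullback : ∀ z : ℕ × ℕ ⊕ ℕ × ℕ → K,
      MvPolynomial.eval z (MvPolynomial.bind₁ (fun v : Fin m × Fin n =>
        orbitEntry w (fun i a => MvPolynomial.X (Sum.inl (i, a)))
          (fun a j => MvPolynomial.X (Sum.inr (a, j))) (v.1 + 1) (v.2 + 1)) f) =
      MvPolynomial.eval (fun v => orbitEntry w (fun i a => z (Sum.inl (i, a)))
        (fun a j => z (Sum.inr (a, j))) (v.1 + 1) (v.2 + 1)) f := fun z => by
    simp [← MvPolynomial.aeval_eq_eval, MvPolynomial.aeval_bind₁, orbitEntry]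
  refine RingHom.mem_ker.trans ⟨fun hf x y => ?_, fun hf => MvPolynomial.funext fun z => ?_⟩
  · refine (eval_pullback (Sum.elim (Function.uncurry x) (Function.uncurry y))).symm.trans ?_
    exact (congrArg _ hf).trans (map_zero _)
  · exact (eval_pullback z).trans ((hf _ _).trans (map_zero _).symm)

theorem X_mem_orbitIdeal_iff [Infinite K] {p : Fin m} {q : Fin n} :
    MvPolynomial.X (p, q) ∈ orbitIdeal K m n w ↔ rnk w (p + 1) (q + 1) = 0 := by
  simp only [mem_orbitIdeal, MvPolynomial.eval_X, rnk, Finset.card_eq_zero, orbitEntry]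
  refine ⟨fun h => Finset.eq_empty_of_forall_notMem fun a ha => ?_, fun h x y => ?_⟩
  · have := h (fun _ b => if b = a then 1 else 0) 1
    rw [Finset.sum_eq_single_of_mem a ha fun b _ hb => by simp [hb]] at this
    simp at this
  · rw [h, Finset.sum_empty]

theorem orbitEntry_truncate {R : Type*} [CommRing R] (w : Equiv.Perm ℕ) (x y : ℕ → ℕ → R) :
    orbitEntry w (fun i a => if a ≤ i then x i a else 0) (fun a j => if w a ≤ j then y a j else 0) =
      orbitEntry w x y := by
  funext i j
  refine Finset.sum_congr rfl fun a ha => ?_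
  simp only [Finset.mem_filter, Finset.mem_Icc] at ha
  simp only [if_pos ha.1.2, if_pos ha.2.2]

theorem orbitEntry_eq_sum {R : Type*} [CommRing R] {x y : ℕ → ℕ → R}
    (hx : ∀ i a, i < a → x i a = 0) (hy : ∀ a j, j < w a → y a j = 0) {i j : ℕ} {s : Finset ℕ}
    (hsub : {a ∈ Finset.Icc 1 i | w a ∈ Finset.Icc 1 j} ⊆ s) (hpos : ∀ a ∈ s, 0 < a ∧ 0 < w a) :
    orbitEntry w x y i j = ∑ a ∈ s, x i a * y a j := by
  refine Finset.sum_subset hsub fun a ha hna => ?_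
  have hpos := hpos a ha
  simp only [Finset.mem_filter, Finset.mem_Icc] at hna
  rcases lt_or_ge i a with hia | hai
  · rw [hx i a hia, zero_mul]
  · rw [hy a j (by omega), mul_zero]

/-- As `t → 0` the factors on the left diverge, while the sum of their products converges: only the
summands at `p` and `r` change, and
`t⁻¹ (t u_p + u_r) (t v_r + v_p) - t⁻¹ u_r v_p = t u_p v_r + u_p v_p + u_r v_r`. -/
theorem sum_shear_mul_shear {ι : Type*} [DecidableEq ι] {s : Finset ι} {p r : ι} (hp : p ∈ s)
    (hr : r ∈ s) (hpr : p ≠ r) {t : K} (ht : t ≠ 0) (u v : ι → K) :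
    (∑ a ∈ s, (if a = p then u p + t⁻¹ * u r else if a = r then -(t⁻¹ * u r) else u a) *
      if a = p then t * v r + v p else if a = r then v p else v a) =
      ∑ a ∈ s, u a * v a + t * (u p * v r) := by
  rw [← sub_eq_iff_eq_add', ← Finset.sum_sub_distrib,
    Finset.sum_eq_add_of_mem p r hp hr hpr fun a _ ha => by simp [ha.1, ha.2]]
  simp only [if_true, if_neg hpr.symm]
  field_simp
  ring

theorem exists_orbitEntry_eq_add (w0 : w 0 = 0) {p r : ℕ} (hp : 0 < p) (hpr : p < r)
    (hw : w p < w r) {x y : ℕ → ℕ → K} (hx : ∀ i a, i < a → x i a = 0)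
    (hy : ∀ a j, j < (w * Equiv.swap p r) a → y a j = 0) {t : K} (ht : t ≠ 0) :
    ∃ x' y' : ℕ → ℕ → K, ∀ i j, orbitEntry w x' y' i j =
      orbitEntry (w * Equiv.swap p r) x y i j + t * (x i p * y r j) := by
  have v0 := mul_swap_apply_zero w0 hp (hp.trans hpr)
  have hyp : ∀ j, j < w r → y p j = 0 := fun j hj => hy p j (by simpa using hj)
  have hyr : ∀ j, j < w p → y r j = 0 := fun j hj => hy r j (by simpa using hj)
  let x' : ℕ → ℕ → K := fun i a =>
    if a = p then x i p + t⁻¹ * x i r else if a = r then -(t⁻¹ * x i r) else x i a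
  let y' : ℕ → ℕ → K := fun a j =>
    if a = p then t * y r j + y p j else if a = r then y p j else y a j
  have hx' : ∀ i a, i < a → x' i a = 0 := by
    intro i a hia
    simp only [x']
    split_ifs with hap har
    · rw [hx i p (hap ▸ hia), hx i r ((hap ▸ hia).trans hpr), mul_zero, add_zero]
    · rw [hx i r (har ▸ hia), mul_zero, neg_zero]
    · exact hx i a hia
  have hy' : ∀ a j, j < w a → y' a j = 0 := by
    intro a j hja
    simp only [y']
    split_ifs with hap har
    · rw [hyr j (hap ▸ hja), hyp j ((hap ▸ hja).trans hw), mul_zero, add_zero]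
    · exact hyp j (har ▸ hja)
    · refine hy a j ?_
      rwa [Equiv.Perm.mul_apply, Equiv.swap_apply_of_ne_of_ne hap har]
  refine ⟨x', y', fun i j => ?_⟩
  have hs : ∀ v : Equiv.Perm ℕ, {a ∈ Finset.Icc 1 i | v a ∈ Finset.Icc 1 j} ⊆
      Finset.Icc 1 (max i r) := fun v =>
    (Finset.filter_subset _ _).trans (Finset.Icc_subset_Icc_right (le_max_left i r))
  have hpos : ∀ v : Equiv.Perm ℕ, v 0 = 0 → ∀ a ∈ Finset.Icc 1 (max i r), 0 < a ∧ 0 < v a :=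
    fun v v0 a ha => ⟨(Finset.mem_Icc.1 ha).1, perm_apply_pos v0 (Finset.mem_Icc.1 ha).1⟩
  rw [orbitEntry_eq_sum hx' hy' (hs w) (hpos w w0), orbitEntry_eq_sum hx hy (hs _) (hpos _ v0)]
  exact sum_shear_mul_shear (by simp; omega) (by simp; omega) hpr.ne ht (x i) (y · j)

theorem eval_eq_zero_of_forall_ne_zero [Infinite K] {σ : Type*} {f : MvPolynomial σ K}
    {A E : σ → K} (h : ∀ t ≠ 0, MvPolynomial.eval (fun v => A v + t * E v) f = 0) :
    MvPolynomial.eval A f = 0 := by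
  let line : Polynomial K :=
    MvPolynomial.aeval (fun v => Polynomial.C (A v) + Polynomial.X * Polynomial.C (E v)) f
  have eval_line : ∀ t, line.eval t = MvPolynomial.eval (fun v => A v + t * E v) f := fun t => by
    simp only [line, ← Polynomial.coe_aeval_eq_eval, ← MvPolynomial.aeval_eq_eval,
      MvPolynomial.comp_aeval_apply]
    simp [mul_comm t]
  have line_eq_zero : line = 0 :=
    Polynomial.eq_zero_of_infinite_isRoot _ ((Set.finite_singleton (0 : K)).infinite_compl.mono
      fun t ht => (eval_line t).trans (h t ht))
  simpa [line_eq_zero] using (eval_line 0).symm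

theorem orbitIdeal_le_mul_swap [Infinite K] (w0 : w 0 = 0) {p r : ℕ} (hp : 0 < p) (hpr : p < r)
    (hw : w p < w r) : orbitIdeal K m n w ≤ orbitIdeal K m n (w * Equiv.swap p r) := by
  intro f hf
  rw [mem_orbitIdeal] at hf ⊢
  intro x y
  rw [← orbitEntry_truncate]
  set X : ℕ → ℕ → K := fun i a => if a ≤ i then x i a else 0
  set Y : ℕ → ℕ → K := fun a j => if (w * Equiv.swap p r) a ≤ j then y a j else 0
  have hX : ∀ i a, i < a → X i a = 0 := fun i a hia => if_neg hia.not_ge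
  have hY : ∀ a j, j < (w * Equiv.swap p r) a → Y a j = 0 := fun a j hja => if_neg hja.not_ge
  refine eval_eq_zero_of_forall_ne_zero (E := fun v => X (v.1 + 1) p * Y r (v.2 + 1)) fun t ht => ?_
  obtain ⟨x', y', h⟩ := exists_orbitEntry_eq_add w0 hp hpr hw hX hY ht
  simpa only [h] using hf x' y'

theorem orbitEntry_mem_Xw (w : Equiv.Perm ℕ) (x y : ℕ → ℕ → K) :
    (Matrix.of fun (a : Fin m) (b : Fin n) => orbitEntry w x y (a + 1) (b + 1)) ∈ Xw K m n w := by
  intro i j hi hj _ _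
  rw [← orbitEntry_truncate]
  set X : ℕ → ℕ → K := fun i a => if a ≤ i then x i a else 0
  set Y : ℕ → ℕ → K := fun a j => if w a ≤ j then y a j else 0
  have hX : ∀ i a, i < a → X i a = 0 := fun i a hia => if_neg hia.not_ge
  have hY : ∀ a j, j < w a → Y a j = 0 := fun a j hja => if_neg hja.not_ge
  let s := {a ∈ Finset.Icc 1 i | w a ∈ Finset.Icc 1 j}
  let left : Matrix (Fin i) s K := Matrix.of fun a c => X (a + 1) c
  let right : Matrix s (Fin j) K := Matrix.of fun c b => Y c (b + 1)
  have factorization : (Matrix.of fun (a : Fin m) (b : Fin n) =>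
      orbitEntry w X Y (a + 1) (b + 1)).submatrix (Fin.castLE hi) (Fin.castLE hj) =
        left * right := by
    ext a b
    refine (orbitEntry_eq_sum hX hY (s := s) ?_ ?_).trans
      (Finset.sum_coe_sort s fun c => X (a + 1) c * Y c (b + 1)).symm <;>
    · intro c
      simp only [s, Finset.mem_filter, Finset.mem_Icc, Fin.val_castLE]
      omega
  calc _ = (left * right).rank := by rw [factorization]
    _ ≤ left.rank := Matrix.rank_mul_le_left left right
    _ ≤ Fintype.card s := left.rank_le_card_width
    _ = rnk w i j := Fintype.card_coe s

theorem mem_IXw {f : MvPolynomial (Fin m × Fin n) K} :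
    f ∈ IXw K m n w ↔ ∀ M ∈ Xw K m n w, MvPolynomial.eval (fun v => M v.1 v.2) f = 0 :=
  Iff.rfl

theorem IXw_le_orbitIdeal [Infinite K] : IXw K m n w ≤ orbitIdeal K m n w := by
  intro f hf
  refine mem_orbitIdeal.2 fun x y => ?_
  simpa only [Matrix.of_apply] using mem_IXw.1 hf _ (orbitEntry_mem_Xw w x y)

theorem eval_genMinor (M : Matrix (Fin m) (Fin n) K) {A : Finset (Fin m)} {B : Finset (Fin n)}
    (h : A.card = B.card) :
    MvPolynomial.eval (fun v => M v.1 v.2) (genMinor K A B h) =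
      (M.submatrix (A.orderEmbOfFin rfl) (B.orderEmbOfFin h.symm)).det := by
  rw [genMinor, RingHom.map_det]
  congr 1
  ext
  simp

theorem IwIdeal_le_IXw : IwIdeal K m n w ≤ IXw K m n w := by
  refine Ideal.span_le.2 ?_
  rintro _ ⟨i, j, A, B, h, hi, him, hj, hjn, hA, hB, hcard, rfl⟩
  refine mem_IXw.2 fun M hM => ?_
  rw [eval_genMinor]
  by_contra hdet
  let rows (s : Fin A.card) : Fin i := ⟨A.orderEmbOfFin rfl s, hA _ (A.orderEmbOfFin_mem rfl s)⟩
  let columns (t : Fin A.card) : Fin j :=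
    ⟨B.orderEmbOfFin h.symm t, hB _ (B.orderEmbOfFin_mem h.symm t)⟩
  have hunit := (Matrix.isUnit_iff_isUnit_det _).2 (isUnit_iff_ne_zero.2 hdet)
  have : A.card ≤ rnk w i j := calc
    A.card = (M.submatrix (A.orderEmbOfFin rfl) (B.orderEmbOfFin h.symm)).rank := by
      rw [Matrix.rank_of_isUnit _ hunit, Fintype.card_fin]
    _ ≤ (M.submatrix (Fin.castLE him) (Fin.castLE hjn)).rank :=
      Matrix.rank_submatrix_le (M.submatrix (Fin.castLE him) (Fin.castLE hjn)) rows columns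
    _ ≤ rnk w i j := hM i j him hjn hi hj
  omega

end OrbitIdeal

section StandardIndependence

variable {K : Type*} [Field K] {m n : ℕ} {w : Equiv.Perm ℕ}

/-- The standard monomials of `w` are linearly independent modulo the orbit ideal of `w`. -/
def IndependentStandard (K : Type*) [Field K] (m n : ℕ) (w : Equiv.Perm ℕ) : Prop :=
  ∀ f ∈ orbitIdeal K m n w, (∀ d ∈ f.support, IsStandard w d) → f = 0

theorem not_isStandard_degree [Infinite K] {τ : TermOrder (Fin m × Fin n)}
    (hτ : IsAntidiagonal K τ) (hw : IndependentStandard K m n w)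
    {f : MvPolynomial (Fin m × Fin n) K} (hf : f ∈ orbitIdeal K m n w) (hf0 : f ≠ 0) :
    ¬ IsStandard w (τ.toMonomialOrder.degree f) :=
  not_isStd_degree (fun _ => hτ.exists_degree_le)
    (Ideal.span_le.1 (IwIdeal_eq_span.ge.trans (IwIdeal_le_IXw.trans IXw_le_orbitIdeal))) hw hf hf0

theorem orbitIdeal_eq_IwIdeal [Infinite K] {τ : TermOrder (Fin m × Fin n)}
    (hτ : IsAntidiagonal K τ) (hw : IndependentStandard K m n w) :
    orbitIdeal K m n w = IwIdeal K m n w := by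
  refine le_antisymm ?_ (IwIdeal_le_IXw.trans IXw_le_orbitIdeal)
  rw [IwIdeal_eq_span]
  exact le_span_of_forall_eq_zero (fun _ => hτ.exists_degree_le)
    (Ideal.span_le.1 (IwIdeal_eq_span.ge.trans (IwIdeal_le_IXw.trans IXw_le_orbitIdeal))) hw

theorem independentStandard_of_rnk_eq_zero (hw : rnk w m n = 0) :
    IndependentStandard K m n w := by
  intro f hf hstd
  have hconst : f.totalDegree = 0 := by
    refine (MvPolynomial.totalDegree_eq_zero_iff _ _).2 fun d hd ⟨a, b⟩ => ?_
    by_contra hab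
    have rank_pos : 1 ≤ rnk w (a + 1) (b + 1) :=
      (one_le_antidiagLength (mem_supportPoints.2 ⟨a, b, hab, rfl⟩) a.val.lt_succ_self
        b.val.zero_le b.val.lt_succ_self).trans (hstd d hd _ _)
    have : rnk w (a + 1) (b + 1) ≤ rnk w m n := rnk_mono w a.2 b.2
    omega
  rw [MvPolynomial.totalDegree_eq_zero_iff_eq_C.1 hconst] at hf ⊢
  by_contra hne
  refine orbitIdeal_isPrime.ne_top (Ideal.eq_top_of_isUnit_mem _ hf ((IsUnit.map _ ?_)))
  exact isUnit_iff_ne_zero.2 fun h => hne (by rw [h, map_zero])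

theorem exists_pivot (w0 : w 0 = 0) (hw : rnk w m n ≠ 0) :
    ∃ (p : Fin m) (q : Fin n), w (p + 1) = q + 1 ∧ rnk w (p + 1) (q + 1) = 1 := by
  classical
  have hex : ∃ i, rnk w i n ≠ 0 := ⟨m, hw⟩
  obtain ⟨p, hp⟩ : ∃ p, Nat.find hex = p + 1 :=
    Nat.exists_eq_succ_of_ne_zero fun h => Nat.find_spec hex (by rw [h]; simp [rnk])
  have hpm : p < m := hp.symm.trans_le (Nat.find_min' hex hw)
  have above : rnk w p n = 0 := not_not.1 (Nat.find_min hex (hp ▸ p.lt_succ_self))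
  have hwp : w (p + 1) ≤ n := by
    have := Nat.find_spec hex
    rw [hp, rnk_succ_left w0, above] at this
    by_contra h
    exact this (by rw [if_neg h])
  obtain ⟨q, hq⟩ := Nat.exists_eq_succ_of_ne_zero (perm_apply_pos w0 p.succ_pos).ne'
  refine ⟨⟨p, hpm⟩, ⟨q, hq.symm.trans_le hwp⟩, hq, ?_⟩
  rw [rnk_succ_left w0, if_pos hq.le,
    Nat.le_zero.1 ((rnk_mono w le_rfl (hq.symm.trans_le hwp)).trans_eq above)]

theorem eq_zero_of_forall_X_dvd {σ : Type*} {P : Ideal (MvPolynomial σ K)} [P.IsPrime] {v : σ}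
    (hv : MvPolynomial.X v ∉ P) {IsStd : (σ →₀ ℕ) → Prop}
    (hmono : ∀ {d e}, d ≤ e → IsStd e → IsStd d)
    (hdvd : ∀ f ∈ P, (∀ d ∈ f.support, IsStd d) → MvPolynomial.X v ∣ f)
    {f : MvPolynomial σ K} (hf : f ∈ P) (hstd : ∀ d ∈ f.support, IsStd d) : f = 0 := by
  induction hk : f.totalDegree using Nat.strong_induction_on generalizing f with
  | _ k ih =>
    by_contra hf0
    obtain ⟨g, rfl⟩ := hdvd f hf hstd
    have hg0 : g ≠ 0 := right_ne_zero_of_mul hf0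
    refine hg0 (ih g.totalDegree ?_ ((Ideal.IsPrime.mem_or_mem ‹_› hf).resolve_left hv)
      (fun d hd => ?_) rfl)
    · rw [← hk, MvPolynomial.totalDegree_mul_of_isDomain (MvPolynomial.X_ne_zero v) hg0,
        MvPolynomial.totalDegree_X]
      exact Nat.lt_add_of_pos_left one_pos
    · refine hmono (self_le_add_left d (Finsupp.single v 1)) (hstd _ ?_)
      rwa [MvPolynomial.mem_support_iff, MvPolynomial.coeff_X_mul, ← MvPolynomial.mem_support_iff]

section Pivot

variable [Infinite K] {τ : TermOrder (Fin m × Fin n)} {p : Fin m} {q : Fin n}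

theorem X_dvd_of_mem_orbitIdeal (hτ : IsAntidiagonal K τ) (w0 : w 0 = 0)
    (hpq : w (p + 1) = q + 1) (hrnk : rnk w (p + 1) (q + 1) = 1)
    (hswap : ∀ r, (p : ℕ) + 1 < r → w (p + 1) < w r →
      IndependentStandard K m n (w * Equiv.swap ((p : ℕ) + 1) r))
    {f : MvPolynomial (Fin m × Fin n) K}
    (hf : f ∈ orbitIdeal K m n w) (hstd : ∀ d ∈ f.support, IsStandard w d) :
    MvPolynomial.X (p, q) ∣ f := by
  rw [MvPolynomial.X_dvd_iff_modMonomial_eq_zero]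
  set g := f.modMonomial (Finsupp.single (p, q) 1) with hg
  by_contra hg0
  set d := τ.toMonomialOrder.degree g
  have hd : MvPolynomial.coeff d g ≠ 0 := τ.toMonomialOrder.coeff_degree_ne_zero_iff.2 hg0
  have hle : ¬ Finsupp.single (p, q) 1 ≤ d := fun hle =>
    hd (MvPolynomial.coeff_modMonomial_of_le _ hle)
  have hdpq : d (p, q) = 0 := by simpa [Finsupp.single_le_iff] using hle
  rw [hg, MvPolynomial.coeff_modMonomial_of_not_le _ hle] at hd
  obtain ⟨r, hpr, hwr, hr⟩ :=
    (hstd d (MvPolynomial.mem_support_iff.2 hd)).exists_mul_swap w0 hpq hrnk hdpq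
  refine not_isStandard_degree hτ (hswap r hpr hwr) ?_ hg0 hr
  have hX : MvPolynomial.X (p, q) ∈ orbitIdeal K m n (w * Equiv.swap ((p : ℕ) + 1) r) := by
    have := rnk_mul_swap (p := p + 1) w0 p.val.succ_pos hpr hwr (p + 1) (q + 1)
    rw [X_mem_orbitIdeal_iff]
    rw [if_pos (by omega)] at this
    omega
  have hfr := orbitIdeal_le_mul_swap w0 p.val.succ_pos hpr hwr hf
  rw [← MvPolynomial.divMonomial_add_modMonomial_single f (p, q)] at hfr
  exact (Ideal.add_mem_iff_right _ (Ideal.mul_mem_right _ _ hX)).1 hfr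

theorem independentStandard_of_forall_mul_swap (hτ : IsAntidiagonal K τ) (w0 : w 0 = 0)
    (hpq : w (p + 1) = q + 1) (hrnk : rnk w (p + 1) (q + 1) = 1)
    (hswap : ∀ r, (p : ℕ) + 1 < r → w (p + 1) < w r →
      IndependentStandard K m n (w * Equiv.swap ((p : ℕ) + 1) r)) :
    IndependentStandard K m n w := fun _ hf hstd =>
  have hX : MvPolynomial.X (p, q) ∉ orbitIdeal K m n w := by
    rw [X_mem_orbitIdeal_iff, hrnk]
    exact one_ne_zero
  eq_zero_of_forall_X_dvd hX (fun hde he => he.mono hde)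
    (fun _ => X_dvd_of_mem_orbitIdeal hτ w0 hpq hrnk hswap) hf hstd

end Pivot

theorem sum_rnk_mul_swap_lt (w0 : w 0 = 0) {p r : ℕ} (hp : 0 < p) (hpm : p ≤ m) (hpn : w p ≤ n)
    (hpr : p < r) (hw : w p < w r) :
    ∑ x ∈ Finset.Icc 1 m ×ˢ Finset.Icc 1 n, rnk (w * Equiv.swap p r) x.1 x.2 <
      ∑ x ∈ Finset.Icc 1 m ×ˢ Finset.Icc 1 n, rnk w x.1 x.2 := by
  have hmem : (p, w p) ∈ Finset.Icc 1 m ×ˢ Finset.Icc 1 n :=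
    Finset.mem_product.2 ⟨Finset.mem_Icc.2 ⟨hp, hpm⟩, Finset.mem_Icc.2 ⟨perm_apply_pos w0 hp, hpn⟩⟩
  refine Finset.sum_lt_sum (fun x _ => ?_) ⟨_, hmem, ?_⟩
  · rw [rnk_mul_swap w0 hp hpr hw]
    exact Nat.le_add_right _ _
  · rw [rnk_mul_swap w0 hp hpr hw, if_pos ⟨le_rfl, hpr, le_rfl, hw⟩]
    exact Nat.lt_succ_self _

theorem independentStandard [Infinite K] {τ : TermOrder (Fin m × Fin n)} (hτ : IsAntidiagonal K τ)
    (w0 : w 0 = 0) : IndependentStandard K m n w := by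
  induction hN : ∑ x ∈ Finset.Icc 1 m ×ˢ Finset.Icc 1 n, rnk w x.1 x.2
    using Nat.strong_induction_on generalizing w with
  | _ N ih =>
    by_cases hw : rnk w m n = 0
    · exact independentStandard_of_rnk_eq_zero hw
    obtain ⟨p, q, hpq, hrnk⟩ := exists_pivot w0 hw
    refine independentStandard_of_forall_mul_swap hτ w0 hpq hrnk fun r hpr hwr => ?_
    refine ih _ ?_ (mul_swap_apply_zero w0 p.val.succ_pos (pos_of_gt hpr)) rfl
    rw [← hN]
    exact sum_rnk_mul_swap_lt w0 p.val.succ_pos p.2 (hpq.trans_le q.2) hpr hwr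

end StandardIndependence

theorem statement17_general (K : Type*) [Field K] [Infinite K] (m n : ℕ) (w : Equiv.Perm ℕ)
    (w0 : w 0 = 0) (τ : TermOrder (Fin m × Fin n)) (hτ : IsAntidiagonal K τ) :
    JwIdeal K m n w = initIdealLe τ (IwIdeal K m n w) ∧
      JwIdeal K m n w = initIdealLe τ (IXw K m n w) ∧
      IwIdeal K m n w = IXw K m n w ∧ (IwIdeal K m n w).IsPrime := by
  have hind : IndependentStandard K m n w := independentStandard hτ w0
  have horbit : orbitIdeal K m n w = IwIdeal K m n w := orbitIdeal_eq_IwIdeal hτ hind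
  have hIX : IwIdeal K m n w = IXw K m n w :=
    le_antisymm IwIdeal_le_IXw (IXw_le_orbitIdeal.trans_eq horbit)
  have hinit : JwIdeal K m n w = initIdealLe τ (IwIdeal K m n w) :=
    le_antisymm hτ.JwIdeal_le
      (initIdealLe_le_JwIdeal fun _ hf => not_isStandard_degree hτ hind (horbit ▸ hf))
  exact ⟨hinit, hIX ▸ hinit, hIX, horbit ▸ orbitIdeal_isPrime⟩

/-- **Knutson–Miller.** Let `w ∈ S^{m,n}_∞` and fix an antidiagonal term
order on `K[u_{ij} : (i,j) ∈ [m] × [n]]` (i.e. the initial term of each minor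
`det(U_{AB})` is the antidiagonal monomial `u_{AB}`). Then
`J_w = init(I_w) = init(I(X_w))` and `I_w = I(X_w)`; in particular `I_w` is prime, and
the defining minors of `I_w` form a Gröbner basis for `I(X_w)`. -/
theorem statement17 (K : Type*) [Field K] [IsAlgClosed K] (m n : ℕ)
    (hm : 1 ≤ m) (hn : 1 ≤ n) (w : Equiv.Perm ℕ) (hw : w ∈ SmnInfty m n)
    (τ : TermOrder (Fin m × Fin n))
    (hanti : ∀ (A : Finset (Fin m)) (B : Finset (Fin n)) (h : A.card = B.card),
      antidiagExp A B h ∈ (genMinor K A B h).support ∧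
        ∀ d ∈ (genMinor K A B h).support, τ.le d (antidiagExp A B h)) :
    JwIdeal K m n w = initIdealLe τ (IwIdeal K m n w) ∧
      JwIdeal K m n w = initIdealLe τ (IXw K m n w) ∧
      IwIdeal K m n w = IXw K m n w ∧ (IwIdeal K m n w).IsPrime := by
  exact statement17_general K m n w hw.1.1 τ hanti

end Paper
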